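/- arXiv:1805.03566 — 2 statements merged into one kernel-verified Lean document; each statement's English description precedes it below -/
import Mathlib

section
/- For every lattice path ν, the right-flushing map R is an order isomorphism from the ν-Tamari lattice Tam(ν) onto the rotation poset of ν-trees; in particular, the ν-Tamari lattice is isomorphic to the rotation lattice of ν-trees. -/
open scoped Classical

/-! Lattice paths: `true` = north step, `false` = east step. -/

def eastSteps (ν : List Bool) : ℕ := ν.count false
def northSteps (ν : List Bool) : ℕ := ν.count true

/-- Height at which the path first reaches abscissa `x`. -/
def heightAt : List Bool → ℕ → ℕ
  | _, 0 => 0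
  | [], _ + 1 => 0
  | true :: rest, x + 1 => heightAt rest (x + 1) + 1
  | false :: rest, x + 1 => heightAt rest x

/-- Lattice point of a path after `i` steps. -/
def pointAt (μ : List Bool) (i : ℕ) : ℕ × ℕ :=
  ((μ.take i).count false, (μ.take i).count true)

/-- The set `A_ν` of lattice points weakly above `ν`. -/
def APts (ν : List Bool) : Set (ℕ × ℕ) :=
  {p | p.1 ≤ eastSteps ν ∧ heightAt ν p.1 ≤ p.2 ∧ p.2 ≤ northSteps ν}

def Incompatible (ν : List Bool) (p q : ℕ × ℕ) : Prop :=
  (p.1 < q.1 ∧ p.2 < q.2 ∧ (q.1, p.2) ∈ APts ν) ∨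
    (q.1 < p.1 ∧ q.2 < p.2 ∧ (p.1, q.2) ∈ APts ν)

def Compatible (ν : List Bool) (p q : ℕ × ℕ) : Prop := ¬ Incompatible ν p q

def IsNuTree (ν : List Bool) (T : Set (ℕ × ℕ)) : Prop :=
  T ⊆ APts ν ∧ T.Pairwise (Compatible ν) ∧
    ∀ T', T' ⊆ APts ν → T'.Pairwise (Compatible ν) → T ⊆ T' → T' = T

def IsRightRotationAt (T T' : Set (ℕ × ℕ)) (q q' : ℕ × ℕ) : Prop :=
  ∃ x y x'' y', q = (x, y) ∧ q' = (x'', y') ∧ x < x'' ∧ y < y' ∧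
    (x, y) ∈ T ∧ (x, y') ∈ T ∧ (x'', y) ∈ T ∧
    (∀ b, y < b → b < y' → (x, b) ∉ T) ∧
    (∀ a, x < a → a < x'' → (a, y) ∉ T) ∧
    (∀ a, x < a → a < x'' → (a, y') ∉ T) ∧
    (∀ b, y < b → b < y' → (x'', b) ∉ T) ∧
    T' = (T \ {(x, y)}) ∪ {(x'', y')}

def IsRightRotation (T T' : Set (ℕ × ℕ)) : Prop :=
  ∃ q q', IsRightRotationAt T T' q q'

/-- Order relation of the rotation poset of ν-trees. -/
def TreeLE (ν : List Bool) : Set (ℕ × ℕ) → Set (ℕ × ℕ) → Prop :=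
  Relation.ReflTransGen fun A B => IsNuTree ν A ∧ IsNuTree ν B ∧ IsRightRotation A B

def IsNuPath (ν μ : List Bool) : Prop :=
  eastSteps μ = eastSteps ν ∧ northSteps μ = northSteps ν ∧
    ∀ i ≤ μ.length, pointAt μ i ∈ APts ν

noncomputable def horiz (ν : List Bool) (p : ℕ × ℕ) : ℕ :=
  sSup {k | (p.1 + k, p.2) ∈ APts ν}

/-- Covering relation of the ν-Tamari lattice. -/
def TamariCover (ν μ μ' : List Bool) : Prop :=
  IsNuPath ν μ ∧ IsNuPath ν μ' ∧
    ∃ i j, 0 < i ∧ i < j ∧ j ≤ μ.length ∧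
      μ.getD (i - 1) true = false ∧ μ.getD i false = true ∧
      horiz ν (pointAt μ j) = horiz ν (pointAt μ i) ∧
      (∀ k, i < k → k < j → horiz ν (pointAt μ k) ≠ horiz ν (pointAt μ i)) ∧
      μ' = μ.take (i - 1) ++ (μ.drop i).take (j - i) ++ [false] ++ μ.drop j

def TamariLE (ν : List Bool) : List Bool → List Bool → Prop :=
  Relation.ReflTransGen (TamariCover ν)

/-! Flushing maps -/

def rowAvail (ν : List Bool) (y : ℕ) : List ℕ :=
  ((List.range (eastSteps ν + 1)).filter fun x => decide (heightAt ν x ≤ y)).reverse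

def pointsAtHeight (μ : List Bool) (y : ℕ) : ℕ :=
  ((List.range (μ.length + 1)).filter fun i => decide ((μ.take i).count true = y)).length

def rflushAux (ν : List Bool) : List ℕ → ℕ → List ℕ → List (ℕ × ℕ)
  | [], _, _ => []
  | c :: rest, y, forbidden =>
    let placed := ((rowAvail ν y).filter fun x => decide (x ∉ forbidden)).take c
    placed.map (fun x => (x, y)) ++ rflushAux ν rest (y + 1) (forbidden ++ placed.dropLast)

/-- Right-flushing map `R`. -/
def Rflush (ν μ : List Bool) : Set (ℕ × ℕ) :=
  {p | p ∈ rflushAux ν ((List.range (northSteps ν + 1)).map (pointsAtHeight μ)) 0 []}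

def lflushAux (m : ℕ) : List ℕ → ℕ → List ℕ → List (ℕ × ℕ)
  | [], _, _ => []
  | c :: rest, y, forbidden =>
    let placed := ((List.range (m + 1)).filter fun x => decide (x ∉ forbidden)).take c
    placed.map (fun x => (x, y)) ++ lflushAux m rest (y + 1) (forbidden ++ placed.dropLast)

noncomputable def rowCount (T : Set (ℕ × ℕ)) (y : ℕ) : ℕ := {x | (x, y) ∈ T}.ncard

/-- Left-flushing map `L`. -/
noncomputable def Lflush (ν : List Bool) (T : Set (ℕ × ℕ)) : Set (ℕ × ℕ) :=
  {p | p ∈ lflushAux (eastSteps ν) ((List.range (northSteps ν + 1)).map (rowCount T)) 0 []}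

def pathPointSet (μ : List Bool) : Set (ℕ × ℕ) := {p | ∃ i ≤ μ.length, pointAt μ i = p}

/-! Bracket vectors (0-indexed positions `0,…,ℓ`). -/

noncomputable def fpos (ν : List Bool) (k : ℕ) : ℕ :=
  sSup {i | i ≤ ν.length ∧ (ν.take i).count true = k}

def bmin (ν : List Bool) : List ℕ :=
  (List.range (ν.length + 1)).map fun i => (ν.take i).count true

def IsBracketVector (ν : List Bool) (b : List ℕ) : Prop :=
  b.length = ν.length + 1 ∧
    (∀ k ≤ northSteps ν, b.getD (fpos ν k) 0 = k) ∧
    (∀ i < b.length, (bmin ν).getD i 0 ≤ b.getD i 0 ∧ b.getD i 0 ≤ northSteps ν) ∧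
    ∀ i j k, i < j → j < k → k < b.length →
      ¬(b.getD i 0 = b.getD k 0 ∧ b.getD i 0 < b.getD j 0)

noncomputable def leftChild (T : Set (ℕ × ℕ)) (p : ℕ × ℕ) : Option (ℕ × ℕ) :=
  if ∃ b, (p.1, b) ∈ T ∧ b < p.2 then some (p.1, sSup {b | (p.1, b) ∈ T ∧ b < p.2})
  else none

noncomputable def rightChild (T : Set (ℕ × ℕ)) (p : ℕ × ℕ) : Option (ℕ × ℕ) :=
  if ∃ a, (a, p.2) ∈ T ∧ p.1 < a then
    if ∃ b, (sInf {a | (a, p.2) ∈ T ∧ p.1 < a}, b) ∈ T ∧ p.2 < b then none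
    else some (sInf {a | (a, p.2) ∈ T ∧ p.1 < a}, p.2)
  else none

noncomputable def inorderAux (T : Set (ℕ × ℕ)) : ℕ → ℕ × ℕ → List (ℕ × ℕ)
  | 0, _ => []
  | fuel + 1, p =>
    (match leftChild T p with
      | none => []
      | some l => inorderAux T fuel l) ++ p ::
      (match rightChild T p with
        | none => []
        | some r => inorderAux T fuel r)

/-- Bracket vector of a ν-tree: y-coordinates read in in-order from the root `(0,n)`. -/
noncomputable def bracketOfTree (ν : List Bool) (T : Set (ℕ × ℕ)) : List ℕ :=
  (inorderAux T T.ncard (0, northSteps ν)).map Prod.snd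

noncomputable def bracketAssign (ν μ : List Bool) : List (ℕ × ℕ) :=
  ((List.range (northSteps ν + 1)).foldl
    (fun (st : List (ℕ × ℕ) × List ℕ) k =>
      let picked := ((st.2.filter fun i => decide (i ≤ fpos ν k)).reverse).take
        (pointsAtHeight μ k)
      (st.1 ++ picked.map fun i => (i, k), st.2.filter fun i => decide (i ∉ picked)))
    ([], List.range (ν.length + 1))).1

/-- Bracket vector of a ν-path. -/
noncomputable def bracketOfPath (ν μ : List Bool) : List ℕ :=
  (List.range (ν.length + 1)).map fun i => ((bracketAssign ν μ).lookup i).getD 0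

/-- Componentwise order on (equal length) integer vectors. -/
def listLE (b b' : List ℕ) : Prop :=
  b.length = b'.length ∧ ∀ i, b.getD i 0 ≤ b'.getD i 0

/-! Reversal -/

def revPath (ν : List Bool) : List Bool := ν.reverse.map fun s => !s

def revTree (ν : List Bool) (T : Set (ℕ × ℕ)) : Set (ℕ × ℕ) :=
  (fun p : ℕ × ℕ => (northSteps ν - p.2, eastSteps ν - p.1)) '' T

/-! Pipe dreams and subword complexes -/

def dOf (ν : List Bool) (p : ℕ × ℕ) : ℕ := p.1 + (northSteps ν - p.2)

def labelPerm (ν : List Bool) (p : ℕ × ℕ) : Equiv.Perm ℕ :=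
  Equiv.swap (dOf ν p + 1) (dOf ν p + 2)

/-- The points of `A_ν` in reading order: rows from bottom to top, each left to right. -/
def readingList (ν : List Bool) : List (ℕ × ℕ) :=
  ((List.range (northSteps ν + 1)).map fun y =>
    ((List.range (eastSteps ν + 1)).filter fun x => decide (heightAt ν x ≤ y)).map
      fun x => (x, y)).flatten

/-- The minimal ν-tree. -/
def TminSet (ν : List Bool) : Set (ℕ × ℕ) :=
  {p | p ∈ APts ν ∧ (p.1 = 0 ∨ ∃ i < ν.length, ν.getD i true = false ∧ p = pointAt ν (i + 1))}

noncomputable def prodOver (ν : List Bool) (C : Set (ℕ × ℕ)) : Equiv.Perm ℕ :=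
  (((readingList ν).filter fun p => decide (p ∈ C)).map (labelPerm ν)).prod

/-- Coxeter length: number of inversions. -/
noncomputable def lenInv (π : Equiv.Perm ℕ) : ℕ :=
  {q : ℕ × ℕ | q.1 < q.2 ∧ π q.2 < π q.1}.ncard

noncomputable def piNu (ν : List Bool) : Equiv.Perm ℕ := prodOver ν (APts ν \ TminSet ν)

def Qword (ν : List Bool) : List (Equiv.Perm ℕ) := (readingList ν).map (labelPerm ν)

noncomputable def prodAt (Q : List (Equiv.Perm ℕ)) (P : Finset ℕ) : Equiv.Perm ℕ :=
  (((List.range Q.length).filter fun i => decide (i ∈ P)).map fun i => Q.getD i 1).prod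

def IsFacet (Q : List (Equiv.Perm ℕ)) (π : Equiv.Perm ℕ) (I : Finset ℕ) : Prop :=
  I ⊆ Finset.range Q.length ∧
    prodAt Q (Finset.range Q.length \ I) = π ∧
    (Finset.range Q.length \ I).card = lenInv π

def IncFlip (Q : List (Equiv.Perm ℕ)) (π : Equiv.Perm ℕ) (I J : Finset ℕ) : Prop :=
  IsFacet Q π I ∧ IsFacet Q π J ∧ ∃ i ∈ I, ∃ j ∈ J, i < j ∧ I.erase i = J.erase j

def FlipLE (Q : List (Equiv.Perm ℕ)) (π : Equiv.Perm ℕ) : Finset ℕ → Finset ℕ → Prop :=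
  Relation.ReflTransGen (IncFlip Q π)

/-- The maximal ν-tree. -/
def TmaxSet (ν : List Bool) : Set (ℕ × ℕ) :=
  {p | (p.1 ≤ eastSteps ν ∧ p.2 = northSteps ν) ∨ ∃ i < ν.length, ν.getD i false = true ∧ p = pointAt ν i}

/-!
Both orders are read off from row statistics: to a `ν`-path attach the number `e y` of its east
steps at height `y`, to a `ν`-tree the number of points of row `y` other than the leftmost one.
Each statistic determines its object, and right-flushing matches them, since the number of lattice
points of a path at height `y` is `e y + 1`.

The link between the two sides is the *slack* of row `y`, the width of that row of `A_ν` minus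
`e 0 + … + e y`. For a path it is the distance from its last point at height `y` to the right
boundary. For a tree it counts the positions to the left of the leftmost point of row `y` that are
not forbidden by the rows below, because every position to its right is forbidden for the rows
above. In both cases the slack is nonnegative and vanishes in the top row, which characterizes the
statistics that occur. The same count shows that all `ν`-trees have as many points as `ν` has
lattice points, so that a compatible family of this size, such as the image of a path, is a
`ν`-tree.

A Tamari cover and a right rotation change the statistic in the same way: one unit of `e` moves
from a row `y` with `0 < e y` to the first higher row whose slack is at most that of row `y`.
-/

theorem heightAt_zero (ν : List Bool) : heightAt ν 0 = 0 := by
  simp [heightAt]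

theorem heightAt_mono (ν : List Bool) : Monotone (heightAt ν) := by
  refine monotone_nat_of_le_succ fun x => ?_
  induction ν generalizing x with
  | nil => cases x <;> simp [heightAt]
  | cons step ν ih =>
    cases x with
    | zero => simp [heightAt_zero]
    | succ x => cases step <;> simpa [heightAt] using ih _

theorem heightAt_le_northSteps (ν : List Bool) (x : ℕ) : heightAt ν x ≤ northSteps ν := by
  induction ν generalizing x with
  | nil => cases x <;> simp [heightAt]
  | cons step ν ih =>
    cases x with
    | zero => simp [heightAt_zero]
    | succ x => cases step <;> simpa [heightAt, northSteps] using ih _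

/-- The largest abscissa of a point of `A_ν` in row `y`. For `y` above the top row this is the
largest abscissa of the top row. -/
noncomputable def rowWidth (ν : List Bool) (y : ℕ) : ℕ :=
  Nat.findGreatest (fun x => heightAt ν x ≤ y) (eastSteps ν)

theorem le_rowWidth_iff {ν : List Bool} {x y : ℕ} :
    x ≤ rowWidth ν y ↔ x ≤ eastSteps ν ∧ heightAt ν x ≤ y := by
  constructor
  · intro hx
    have hspec : heightAt ν (rowWidth ν y) ≤ y :=
      Nat.findGreatest_spec (P := fun x => heightAt ν x ≤ y) (Nat.zero_le _)
        (by simp [heightAt_zero])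
    exact ⟨hx.trans (Nat.findGreatest_le _), (heightAt_mono ν hx).trans hspec⟩
  · rintro ⟨hx, hy⟩
    exact Nat.le_findGreatest hx hy

theorem mem_APts_iff {ν : List Bool} {x y : ℕ} :
    (x, y) ∈ APts ν ↔ y ≤ northSteps ν ∧ x ≤ rowWidth ν y := by
  rw [le_rowWidth_iff]
  simp only [APts, Set.mem_ofPred_eq]
  tauto

theorem rowWidth_mono (ν : List Bool) : Monotone (rowWidth ν) := by
  intro y y' hy
  have hself := le_rowWidth_iff.1 (le_refl (rowWidth ν y))
  exact le_rowWidth_iff.2 ⟨hself.1, hself.2.trans hy⟩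

theorem rowWidth_northSteps (ν : List Bool) : rowWidth ν (northSteps ν) = eastSteps ν :=
  le_antisymm (Nat.findGreatest_le _) (le_rowWidth_iff.2 ⟨le_rfl, heightAt_le_northSteps ν _⟩)

theorem finite_APts (ν : List Bool) : (APts ν).Finite :=
  ((Set.finite_Iic (eastSteps ν)).prod (Set.finite_Iic (northSteps ν))).subset
    fun _ hp => ⟨hp.1, hp.2.2⟩

/-- A set of pairwise `ν`-compatible points of `A_ν`, a face of the `ν`-Tamari complex.
The `ν`-trees are the maximal ones. -/
structure IsCompatibleFamily (ν : List Bool) (T : Set (ℕ × ℕ)) : Prop where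
  subset_APts : T ⊆ APts ν
  pairwise : T.Pairwise (Compatible ν)

namespace IsCompatibleFamily

variable {ν : List Bool} {T : Set (ℕ × ℕ)}

theorem of_rowWidth_lt (hsub : T ⊆ APts ν)
    (hlt : ∀ {a b c d}, (a, b) ∈ T → (c, d) ∈ T → a < c → b < d → rowWidth ν b < c) :
    IsCompatibleFamily ν T := by
  refine ⟨hsub, ?_⟩
  rintro ⟨a, b⟩ hp ⟨c, d⟩ hq - (⟨hac, hbd, hmem⟩ | ⟨hca, hdb, hmem⟩)
  · exact (hlt hp hq hac hbd).not_ge (mem_APts_iff.1 hmem).2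
  · exact (hlt hq hp hca hdb).not_ge (mem_APts_iff.1 hmem).2

variable (hT : IsCompatibleFamily ν T)
include hT

theorem le_northSteps {x y : ℕ} (hp : (x, y) ∈ T) : y ≤ northSteps ν :=
  (mem_APts_iff.1 (hT.subset_APts hp)).1

theorem le_rowWidth {x y : ℕ} (hp : (x, y) ∈ T) : x ≤ rowWidth ν y :=
  (mem_APts_iff.1 (hT.subset_APts hp)).2

theorem rowWidth_lt {a b c d : ℕ} (hp : (a, b) ∈ T) (hq : (c, d) ∈ T) (hac : a < c)
    (hbd : b < d) : rowWidth ν b < c := by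
  by_contra! hc
  exact hT.pairwise hp hq (by simp [hac.ne])
    (Or.inl ⟨hac, hbd, mem_APts_iff.2 ⟨hT.le_northSteps hp, hc⟩⟩)

theorem finite_row (y : ℕ) : {x | (x, y) ∈ T}.Finite :=
  (Set.finite_Iic (rowWidth ν y)).subset fun _ hx => hT.le_rowWidth hx

theorem finite : T.Finite := (finite_APts ν).subset hT.subset_APts

end IsCompatibleFamily

theorem isNuTree_iff_maximal {ν : List Bool} {T : Set (ℕ × ℕ)} :
    IsNuTree ν T ↔ Maximal (IsCompatibleFamily ν) T := by
  rw [maximal_iff]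
  exact ⟨fun ⟨hsub, hpair, hmax⟩ => ⟨⟨hsub, hpair⟩, fun T' h hle => (hmax T' h.1 h.2 hle).symm⟩,
    fun ⟨h, hmax⟩ => ⟨h.1, h.2, fun T' hsub hpair hle => (hmax ⟨hsub, hpair⟩ hle).symm⟩⟩

theorem IsCompatibleFamily.exists_isNuTree_superset {ν : List Bool} {T : Set (ℕ × ℕ)}
    (hT : IsCompatibleFamily ν T) : ∃ T', T ⊆ T' ∧ IsNuTree ν T' := by
  have hfin : {T | IsCompatibleFamily ν T}.Finite :=
    (finite_APts ν).finite_subsets.subset fun _ h => h.subset_APts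
  obtain ⟨T', hle, hmax⟩ := hfin.exists_le_maximal hT
  exact ⟨T', hle, isNuTree_iff_maximal.2 hmax⟩

theorem IsNuTree.isCompatibleFamily {ν : List Bool} {T : Set (ℕ × ℕ)} (hT : IsNuTree ν T) :
    IsCompatibleFamily ν T := ⟨hT.1, hT.2.1⟩

theorem IsNuTree.exists_southwest_or_northeast {ν : List Bool} {T : Set (ℕ × ℕ)}
    (hT : IsNuTree ν T) {x y : ℕ} (hp : (x, y) ∈ APts ν) (hnot : (x, y) ∉ T) :
    (∃ a b, (a, b) ∈ T ∧ a < x ∧ b < y ∧ x ≤ rowWidth ν b) ∨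
      ∃ c d, (c, d) ∈ T ∧ x < c ∧ y < d ∧ c ≤ rowWidth ν y := by
  obtain ⟨⟨c, d⟩, hq, hinc⟩ : ∃ q ∈ T, Incompatible ν (x, y) q := by
    by_contra! hcompat
    refine hnot (hT.2.2 (insert (x, y) T) (Set.insert_subset hp hT.1) ?_
      (Set.subset_insert _ _) ▸ Set.mem_insert _ _)
    exact hT.2.1.insert fun q hq _ => ⟨hcompat q hq, fun h => hcompat q hq (Or.symm h)⟩
  rcases hinc with ⟨hxc, hyd, hmem⟩ | ⟨hcx, hdy, hmem⟩
  · exact Or.inr ⟨c, d, hq, hxc, hyd, (mem_APts_iff.1 hmem).2⟩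
  · exact Or.inl ⟨c, d, hq, hcx, hdy, (mem_APts_iff.1 hmem).2⟩

/-- The abscissae of the points of row `y` of `T` other than the leftmost one: those which row `y`
makes unavailable to the rows above it. -/
def nonLeftmost (T : Set (ℕ × ℕ)) (y : ℕ) : Set ℕ :=
  {x | (x, y) ∈ T ∧ ∃ t < x, (t, y) ∈ T}

/-- The abscissa `x` is forbidden in row `y` by the rows of `T` below it. -/
def Forbidden (T : Set (ℕ × ℕ)) (y x : ℕ) : Prop :=
  ∃ j < y, x ∈ nonLeftmost T j

section Forbidden

variable {ν : List Bool} {T : Set (ℕ × ℕ)} {x y z : ℕ}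

theorem Forbidden.mono (h : Forbidden T y x) (hyz : y ≤ z) : Forbidden T z x :=
  let ⟨j, hj, hx⟩ := h
  ⟨j, hj.trans_le hyz, hx⟩

theorem forbidden_succ : Forbidden T (y + 1) x ↔ Forbidden T y x ∨ x ∈ nonLeftmost T y := by
  simp only [Forbidden, Nat.lt_succ_iff_lt_or_eq, or_and_right, exists_or, exists_eq_left]

theorem not_forbidden_zero : ¬ Forbidden T y 0 := fun ⟨_, _, _, _, h, _⟩ => Nat.not_lt_zero _ h

theorem mem_nonLeftmost_iff (hx : IsLeast {x | (x, y) ∈ T} x) {a : ℕ} :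
    a ∈ nonLeftmost T y ↔ (a, y) ∈ T ∧ x < a :=
  and_congr_right fun _ => ⟨fun ⟨_, hta, ht⟩ => (hx.2 ht).trans_lt hta, fun h => ⟨x, h, hx.1⟩⟩

theorem mem_row_iff (hx : IsLeast {x | (x, y) ∈ T} x) {a : ℕ} :
    (a, y) ∈ T ↔ a = x ∨ a ∈ nonLeftmost T y := by
  rw [mem_nonLeftmost_iff hx]
  refine ⟨fun ha => ?_, fun h => h.elim (fun h => h ▸ hx.1) And.left⟩
  exact (hx.2 ha).eq_or_lt.imp Eq.symm fun h => ⟨ha, h⟩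

namespace IsCompatibleFamily

variable (hT : IsCompatibleFamily ν T)
include hT

theorem not_forbidden (hp : (x, y) ∈ T) : ¬ Forbidden T y x := by
  rintro ⟨j, hjy, hxj, t, htx, htj⟩
  exact (hT.rowWidth_lt htj hp htx hjy).not_ge (hT.le_rowWidth hxj)

theorem le_rowWidth_of_forbidden_succ (hx : Forbidden T (y + 1) x) : x ≤ rowWidth ν y := by
  obtain ⟨j, hj, hxj, -⟩ := hx
  exact (hT.le_rowWidth hxj).trans (rowWidth_mono ν (Nat.lt_succ_iff.1 hj))

theorem finite_nonLeftmost (y : ℕ) : (nonLeftmost T y).Finite :=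
  (hT.finite_row y).subset fun _ h => h.1

theorem finite_forbidden (y : ℕ) : {x | Forbidden T y x}.Finite :=
  (Set.finite_Iic (rowWidth ν y)).subset fun _ h =>
    hT.le_rowWidth_of_forbidden_succ (h.mono y.le_succ)

theorem not_forbidden_of_forall_notMem (hx : IsLeast {x | (x, y) ∈ T} x)
    (hno : ∀ i, y < i → i < z → (x, i) ∉ T) : ¬ Forbidden T z x := by
  rintro ⟨i, hiz, hxi, t, htx, hti⟩
  rcases lt_trichotomy i y with hiy | rfl | hyi
  · exact hT.not_forbidden hx.1 ⟨i, hiy, hxi, t, htx, hti⟩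
  · exact (hx.2 hti).not_gt htx
  · exact hno i hyi hiz hxi

end IsCompatibleFamily

namespace IsNuTree

variable (hT : IsNuTree ν T)
include hT

theorem forbidden_of_southwest {a b : ℕ} (hp : (a, b) ∈ T) (hax : a < x)
    (hxb : x ≤ rowWidth ν b) : Forbidden T (b + 1) x := by
  induction b using Nat.strong_induction_on generalizing a with
  | _ b ih =>
    by_cases hxT : (x, b) ∈ T
    · exact ⟨b, b.lt_succ_self, hxT, a, hax, hp⟩
    have hcomp := hT.isCompatibleFamily
    rcases hT.exists_southwest_or_northeast (mem_APts_iff.2 ⟨hcomp.le_northSteps hp, hxb⟩) hxT with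
      ⟨a', b', hp', hax', hbb', hxb'⟩ | ⟨c, d, hq, hxc, hbd, hcb⟩
    · exact (ih b' hbb' hp' hax' hxb').mono (by omega)
    · exact absurd hcb (hcomp.rowWidth_lt hp hq (hax.trans hxc) hbd).not_ge

theorem mem_of_not_forbidden {t : ℕ} (ht : (t, y) ∈ T) (htx : t < x) (hx : x ≤ rowWidth ν y)
    (hfree : ¬ Forbidden T y x) : (x, y) ∈ T :=
  ((forbidden_succ.1 (hT.forbidden_of_southwest ht htx hx)).resolve_left hfree).1

theorem mem_of_maximal_not_forbidden (hy : y ≤ northSteps ν)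
    (hx : Maximal (fun a => a ≤ rowWidth ν y ∧ ¬ Forbidden T y a) x) : (x, y) ∈ T := by
  by_contra hnot
  have hcomp := hT.isCompatibleFamily
  rcases hT.exists_southwest_or_northeast (mem_APts_iff.2 ⟨hy, hx.1.1⟩) hnot with
    ⟨a, b, hp, hax, hby, hxb⟩ | ⟨c, d, hq, hxc, hyd, hcy⟩
  · exact hx.1.2 ((hT.forbidden_of_southwest hp hax hxb).mono hby)
  · have hfree : ¬ Forbidden T y c := fun h => hcomp.not_forbidden hq (h.mono hyd.le)
    exact (hx.2 ⟨hcy, hfree⟩ hxc.le).not_gt hxc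

theorem exists_isLeast_row (hy : y ≤ northSteps ν) : ∃ x, IsLeast {x | (x, y) ∈ T} x := by
  have hfin : {a | a ≤ rowWidth ν y ∧ ¬ Forbidden T y a}.Finite :=
    (Set.finite_Iic (rowWidth ν y)).subset fun _ h => h.1
  obtain ⟨x, -, hx⟩ := hfin.exists_le_maximal (a := 0) ⟨Nat.zero_le _, not_forbidden_zero⟩
  have hne : {x | (x, y) ∈ T}.Nonempty := ⟨x, hT.mem_of_maximal_not_forbidden hy hx⟩
  exact ⟨_, isLeast_csInf hne⟩

theorem mem_top_row (hx : x ≤ rowWidth ν (northSteps ν))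
    (hfree : ¬ Forbidden T (northSteps ν) x) : (x, northSteps ν) ∈ T := by
  by_contra hnot
  rcases hT.exists_southwest_or_northeast (mem_APts_iff.2 ⟨le_rfl, hx⟩) hnot with
    ⟨a, b, hp, hax, hby, hxb⟩ | ⟨c, d, hq, -, hnd, -⟩
  · exact hfree ((hT.forbidden_of_southwest hp hax hxb).mono hby)
  · exact (hT.isCompatibleFamily.le_northSteps hq).not_gt hnd

theorem lt_of_forall_notMem (hx : IsLeast {x | (x, y) ∈ T} x) (hyz : y < z)
    (hno : ∀ i, y < i → i ≤ z → (x, i) ∉ T) {t : ℕ} (ht : (t, z) ∈ T) : x < t := by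
  have hcomp := hT.isCompatibleFamily
  by_contra! htx
  refine hno z hyz le_rfl ?_
  rcases htx.eq_or_lt with rfl | htx
  · exact ht
  · exact hT.mem_of_not_forbidden ht htx ((hcomp.le_rowWidth hx.1).trans (rowWidth_mono ν hyz.le))
      (hcomp.not_forbidden_of_forall_notMem hx fun i hyi hiz => hno i hyi hiz.le)

theorem exists_mem_above (hx : IsLeast {x | (x, y) ∈ T} x) (hy : y < northSteps ν) :
    ∃ z, y < z ∧ (x, z) ∈ T := by
  have hcomp := hT.isCompatibleFamily
  by_contra! hno
  exact hno _ hy (hT.mem_top_row ((hcomp.le_rowWidth hx.1).trans (rowWidth_mono ν hy.le))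
    (hcomp.not_forbidden_of_forall_notMem hx fun i hyi _ => hno i hyi))

end IsNuTree

end Forbidden

/-- The number of points of row `y` of `T` other than the leftmost one. Right-flushing turns the
number of east steps of a path at height `y` into this number. -/
noncomputable def rowExcess (T : Set (ℕ × ℕ)) (y : ℕ) : ℕ := (nonLeftmost T y).ncard

/-- The free positions to the left of `x` in row `y` of `T`. -/
def freeLeft (T : Set (ℕ × ℕ)) (y x : ℕ) : Set ℕ := {a | a < x ∧ ¬ Forbidden T y a}

/-- The horizontal distance from the rightmost point at height `y` of a path having `e j` east steps
at height `j` to the right boundary of `A_ν`. It is negative when the path leaves `A_ν`. -/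
noncomputable def slack (ν : List Bool) (e : ℕ → ℕ) (y : ℕ) : ℤ :=
  rowWidth ν y - ∑ j ∈ Finset.range (y + 1), (e j : ℤ)

section Counting

variable {ν : List Bool} {T : Set (ℕ × ℕ)} {x y z : ℕ}

theorem finite_freeLeft (T : Set (ℕ × ℕ)) (y x : ℕ) : (freeLeft T y x).Finite :=
  (Set.finite_Iio x).subset fun _ h => h.1

theorem IsCompatibleFamily.ncard_forbidden (hT : IsCompatibleFamily ν T) (y : ℕ) :
    {x | Forbidden T y x}.ncard = ∑ j ∈ Finset.range y, rowExcess T j := by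
  induction y with
  | zero => simp [Forbidden]
  | succ y ih =>
    have hunion : {x | Forbidden T (y + 1) x} = {x | Forbidden T y x} ∪ nonLeftmost T y :=
      Set.ext fun _ => forbidden_succ
    have hdisj : Disjoint {x | Forbidden T y x} (nonLeftmost T y) :=
      Set.disjoint_left.2 fun _ hf hx => hT.not_forbidden hx.1 hf
    rw [hunion, Set.ncard_union_eq hdisj (hT.finite_forbidden y) (hT.finite_nonLeftmost y), ih,
      Finset.sum_range_succ, rowExcess]

theorem IsCompatibleFamily.rowCount_eq (hT : IsCompatibleFamily ν T)
    (hx : IsLeast {x | (x, y) ∈ T} x) : rowCount T y = rowExcess T y + 1 := by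
  have hrow : {x | (x, y) ∈ T} = insert x (nonLeftmost T y) := Set.ext fun _ => mem_row_iff hx
  have hnot : x ∉ nonLeftmost T y := fun h => ((mem_nonLeftmost_iff hx).1 h).2.false
  rw [rowCount, hrow, Set.ncard_insert_of_notMem hnot (hT.finite_nonLeftmost y), rowExcess]

theorem IsCompatibleFamily.rowExcess_eq_zero (hT : IsCompatibleFamily ν T)
    (hy : northSteps ν < y) : rowExcess T y = 0 := by
  have hempty : nonLeftmost T y = ∅ :=
    Set.eq_empty_of_forall_notMem fun x hx => (hT.le_northSteps hx.1).not_gt hy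
  rw [rowExcess, hempty, Set.ncard_empty]

namespace IsNuTree

variable (hT : IsNuTree ν T)
include hT

theorem Iic_rowWidth_eq (hx : IsLeast {x | (x, y) ∈ T} x) :
    Set.Iic (rowWidth ν y) = insert x ({a | Forbidden T (y + 1) a} ∪ freeLeft T y x) := by
  have hcomp := hT.isCompatibleFamily
  have hxw := hcomp.le_rowWidth hx.1
  refine Set.Subset.antisymm (fun a ha => ?_) ?_
  · rcases lt_trichotomy a x with hax | rfl | hxa
    · exact Or.inr (or_iff_not_imp_left.2 fun hf =>
        ⟨hax, fun h => hf (h.mono y.le_succ)⟩)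
    · exact Set.mem_insert _ _
    · exact Or.inr (Or.inl (hT.forbidden_of_southwest hx.1 hxa ha))
  · rintro a (rfl | hf | ⟨hax, -⟩)
    · exact hxw
    · exact hcomp.le_rowWidth_of_forbidden_succ hf
    · exact hax.le.trans hxw

theorem slack_eq_ncard_freeLeft (hx : IsLeast {x | (x, y) ∈ T} x) :
    slack ν (rowExcess T) y = (freeLeft T y x).ncard := by
  have hcomp := hT.isCompatibleFamily
  have hdisj : Disjoint {a | Forbidden T (y + 1) a} (freeLeft T y x) := by
    refine Set.disjoint_left.2 fun a hf hfree => ?_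
    rcases forbidden_succ.1 hf with h | h
    · exact hfree.2 h
    · exact (hx.2 h.1).not_gt hfree.1
  have hnot : x ∉ {a | Forbidden T (y + 1) a} ∪ freeLeft T y x := by
    rintro (hf | hfree)
    · exact hcomp.not_forbidden_of_forall_notMem hx (fun i hyi hiy => absurd hiy (by omega)) hf
    · exact hfree.1.false
  have hcard := congrArg Set.ncard (hT.Iic_rowWidth_eq hx)
  rw [Set.ncard_insert_of_notMem hnot ((hcomp.finite_forbidden _).union (finite_freeLeft T y x)),
    Set.ncard_union_eq hdisj (hcomp.finite_forbidden _) (finite_freeLeft T y x),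
    hcomp.ncard_forbidden, ← Finset.coe_Iic, Set.ncard_coe_finset, Nat.card_Iic] at hcard
  rw [slack, ← Nat.cast_sum]
  omega

theorem slack_nonneg (hy : y ≤ northSteps ν) : 0 ≤ slack ν (rowExcess T) y := by
  obtain ⟨x, hx⟩ := hT.exists_isLeast_row hy
  exact hT.slack_eq_ncard_freeLeft hx ▸ Int.natCast_nonneg _

theorem slack_northSteps : slack ν (rowExcess T) (northSteps ν) = 0 := by
  have hx : IsLeast {x | (x, northSteps ν) ∈ T} 0 :=
    ⟨hT.mem_top_row (Nat.zero_le _) not_forbidden_zero, fun _ _ => Nat.zero_le _⟩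
  simp [hT.slack_eq_ncard_freeLeft hx, freeLeft]

theorem slack_le (hx : IsLeast {x | (x, y) ∈ T} x) (hyz : y < z) (hxz : (x, z) ∈ T) :
    slack ν (rowExcess T) z ≤ slack ν (rowExcess T) y := by
  obtain ⟨x', hx'⟩ := hT.exists_isLeast_row (hT.isCompatibleFamily.le_northSteps hxz)
  rw [hT.slack_eq_ncard_freeLeft hx, hT.slack_eq_ncard_freeLeft hx', Nat.cast_le]
  exact Set.ncard_le_ncard (fun a ⟨hax, hfree⟩ => ⟨hax.trans_le (hx'.2 hxz),
    fun hf => hfree (hf.mono hyz.le)⟩) (finite_freeLeft T y x)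

theorem freeLeft_ssubset (hx : IsLeast {x | (x, y) ∈ T} x) (hyz : y < z)
    (hno : ∀ i, y < i → i ≤ z → (x, i) ∉ T) {x' : ℕ} (hx' : (x', z) ∈ T) :
    freeLeft T y x ⊂ freeLeft T z x' := by
  have hxx' := hT.lt_of_forall_notMem hx hyz hno hx'
  have hfree : x ∈ freeLeft T z x' := ⟨hxx', hT.isCompatibleFamily.not_forbidden_of_forall_notMem hx
    fun i hyi hiz => hno i hyi hiz.le⟩
  refine (Set.ssubset_iff_of_subset ?_).2 ⟨x, hfree, fun h => h.1.false⟩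
  rintro a ⟨hax, hfa⟩
  refine ⟨hax.trans hxx', ?_⟩
  rintro ⟨i, hiz, hai, t, hta, hti⟩
  rcases lt_trichotomy i y with hiy | rfl | hyi
  · exact hfa ⟨i, hiy, hai, t, hta, hti⟩
  · exact (hx.2 hai).not_gt hax
  · exact (hT.lt_of_forall_notMem hx hyi (fun k hyk hki => hno k hyk (hki.trans hiz.le)) hai).not_gt
      hax

theorem slack_lt (hx : IsLeast {x | (x, y) ∈ T} x) (hyz : y < z) (hz : z ≤ northSteps ν)
    (hno : ∀ i, y < i → i ≤ z → (x, i) ∉ T) :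
    slack ν (rowExcess T) y < slack ν (rowExcess T) z := by
  obtain ⟨x', hx'⟩ := hT.exists_isLeast_row hz
  rw [hT.slack_eq_ncard_freeLeft hx, hT.slack_eq_ncard_freeLeft hx', Nat.cast_lt]
  exact Set.ncard_lt_ncard (hT.freeLeft_ssubset hx hyz hno hx'.1) (finite_freeLeft T z x')

end IsNuTree

theorem IsCompatibleFamily.ncard_eq_sum_rowCount (hT : IsCompatibleFamily ν T) :
    T.ncard = ∑ y ∈ Finset.range (northSteps ν + 1), rowCount T y := by
  rw [Set.ncard_eq_toFinset_card T hT.finite, Finset.card_eq_sum_card_fiberwise (f := Prod.snd)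
    (t := Finset.range (northSteps ν + 1))]
  · refine Finset.sum_congr rfl fun y _ => ?_
    have himage : ((hT.finite.toFinset.filter (·.2 = y) : Finset (ℕ × ℕ)) : Set (ℕ × ℕ)) =
        (fun x => (x, y)) '' {x | (x, y) ∈ T} := by
      ext ⟨a, b⟩
      simp only [Finset.coe_filter, Set.Finite.mem_toFinset, Set.mem_ofPred_eq, Set.mem_image,
        Prod.mk.injEq]
      grind
    rw [← Set.ncard_coe_finset, himage, rowCount,
      Set.ncard_image_of_injective _ (Prod.mk_left_injective y)]
  · rintro ⟨x, y⟩ hp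
    simpa [Nat.lt_succ_iff] using hT.le_northSteps (hT.finite.mem_toFinset.1 hp)

theorem IsNuTree.ncard_eq (hT : IsNuTree ν T) : T.ncard = eastSteps ν + northSteps ν + 1 := by
  have hcomp := hT.isCompatibleFamily
  have hrow : ∀ y ∈ Finset.range (northSteps ν + 1), rowCount T y = rowExcess T y + 1 := by
    intro y hy
    obtain ⟨x, hx⟩ := hT.exists_isLeast_row (Nat.lt_succ_iff.1 (Finset.mem_range.1 hy))
    exact hcomp.rowCount_eq hx
  have hslack := hT.slack_northSteps
  rw [slack, rowWidth_northSteps, ← Nat.cast_sum] at hslack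
  rw [hcomp.ncard_eq_sum_rowCount, Finset.sum_congr rfl hrow, Finset.sum_add_distrib]
  simp only [Finset.sum_const, Finset.card_range, smul_eq_mul]
  omega

theorem IsCompatibleFamily.isNuTree_of_ncard (hT : IsCompatibleFamily ν T)
    (hcard : T.ncard = eastSteps ν + northSteps ν + 1) : IsNuTree ν T := by
  obtain ⟨T', hle, hT'⟩ := hT.exists_isNuTree_superset
  have heq : T = T' := Set.eq_of_subset_of_ncard_le hle (hT'.ncard_eq.trans hcard.symm).le
    hT'.isCompatibleFamily.finite
  exact heq ▸ hT'

end Counting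

namespace IsNuTree

variable {ν : List Bool} {T T' : Set (ℕ × ℕ)}

theorem mem_of_rowExcess_eq (hT : IsNuTree ν T) (hT' : IsNuTree ν T') {x y : ℕ}
    (hexcess : rowExcess T y = rowExcess T' y)
    (hforb : ∀ a, Forbidden T y a ↔ Forbidden T' y a) (hx : (x, y) ∈ T) : (x, y) ∈ T' := by
  have hcomp := hT.isCompatibleFamily
  have hcomp' := hT'.isCompatibleFamily
  by_contra hx'
  have hsub : {a | (a, y) ∈ T'} ⊆ {a | (a, y) ∈ T} := fun a ha => by
    rcases lt_trichotomy a x with hax | rfl | hxa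
    · exact absurd (hT'.mem_of_not_forbidden ha hax (hcomp.le_rowWidth hx)
        (mt (hforb x).2 (hcomp.not_forbidden hx))) hx'
    · exact hx
    · exact hT.mem_of_not_forbidden hx hxa (hcomp'.le_rowWidth ha)
        (mt (hforb a).1 (hcomp'.not_forbidden ha))
  have hlt : rowCount T' y < rowCount T y :=
    Set.ncard_lt_ncard ((Set.ssubset_iff_of_subset hsub).2 ⟨x, hx, hx'⟩) (hcomp.finite_row y)
  obtain ⟨a, ha⟩ := hT.exists_isLeast_row (hcomp.le_northSteps hx)
  obtain ⟨a', ha'⟩ := hT'.exists_isLeast_row (hcomp.le_northSteps hx)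
  rw [hcomp.rowCount_eq ha, hcomp'.rowCount_eq ha', hexcess] at hlt
  exact hlt.false

theorem eq_of_rowExcess_eq (hT : IsNuTree ν T) (hT' : IsNuTree ν T')
    (hexcess : rowExcess T = rowExcess T') : T = T' := by
  have hrow : ∀ y x, (x, y) ∈ T ↔ (x, y) ∈ T' := by
    intro y
    induction y using Nat.strong_induction_on with
    | _ y ih =>
      have hforb : ∀ a, Forbidden T y a ↔ Forbidden T' y a := fun a =>
        exists_congr fun j => and_congr_right fun hj => by simp [nonLeftmost, ih j hj]
      exact fun x => ⟨hT.mem_of_rowExcess_eq hT' (congrFun hexcess y) hforb,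
        hT'.mem_of_rowExcess_eq hT (congrFun hexcess y).symm fun a => (hforb a).symm⟩
  exact Set.ext fun p => hrow p.2 p.1

theorem rowCount_eq_add_indicator (hT : IsNuTree ν T) :
    rowCount T = rowExcess T + (Set.Iic (northSteps ν)).indicator 1 := by
  have hcomp := hT.isCompatibleFamily
  funext y
  by_cases hy : y ≤ northSteps ν
  · obtain ⟨x, hx⟩ := hT.exists_isLeast_row hy
    simp [hcomp.rowCount_eq hx, hy]
  · have hempty : {x | (x, y) ∈ T} = ∅ :=
      Set.eq_empty_of_forall_notMem fun x hx => hy (hcomp.le_northSteps hx)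
    simp [rowCount, hempty, hcomp.rowExcess_eq_zero (not_le.1 hy), hy]

end IsNuTree

/-- The numbers of east steps at each height of two paths are related by moving one east step from
height `y` to height `z`, where `z` is the first height above `y` at which the slack is at most that
at `y`. This is the common shape of a `ν`-Tamari cover and of a right rotation. -/
structure IsEastTransfer (ν : List Bool) (e e' : ℕ → ℕ) (y z : ℕ) : Prop where
  le_northSteps : z ≤ northSteps ν
  isLeast : IsLeast {k | y < k ∧ slack ν e k ≤ slack ν e y} z
  add_single : e' + Pi.single y 1 = e + Pi.single z 1

namespace IsEastTransfer

variable {ν : List Bool} {e e' e'' : ℕ → ℕ} {y z z' : ℕ}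

theorem lt_northSteps (h : IsEastTransfer ν e e' y z) : y < northSteps ν :=
  h.isLeast.1.1.trans_le h.le_northSteps

theorem pos (h : IsEastTransfer ν e e' y z) : 0 < e y := by
  have hy := congrFun h.add_single y
  simp only [Pi.add_apply, Pi.single_eq_same, Pi.single_eq_of_ne h.isLeast.1.1.ne] at hy
  omega

theorem unique (h : IsEastTransfer ν e e' y z) (h' : IsEastTransfer ν e e'' y z') : e' = e'' := by
  obtain rfl := h.isLeast.unique h'.isLeast
  exact add_right_cancel (h.add_single.trans h'.add_single.symm)

end IsEastTransfer

/-- The points `(x, y)`, `(x, z)`, `(x', y)` of `T` form an elbow at which `T` can be rotated. The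
remaining emptiness conditions of a right rotation hold automatically in a compatible family. -/
structure IsElbow (T : Set (ℕ × ℕ)) (x y x' z : ℕ) : Prop where
  lt_fst : x < x'
  lt_snd : y < z
  corner_mem : (x, y) ∈ T
  above_mem : (x, z) ∈ T
  right_mem : (x', y) ∈ T
  notMem_above : ∀ b, y < b → b < z → (x, b) ∉ T
  notMem_right : ∀ a, x < a → a < x' → (a, y) ∉ T

theorem isRightRotation_iff_exists_isElbow {ν : List Bool} {T T' : Set (ℕ × ℕ)}
    (hT : IsCompatibleFamily ν T) :
    IsRightRotation T T' ↔
      ∃ x y x' z, IsElbow T x y x' z ∧ T' = insert (x', z) (T \ {(x, y)}) := by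
  constructor
  · rintro ⟨-, -, x, y, x', z, -, -, hx, hy, hc, ha, hr, hga, hgr, -, -, rfl⟩
    exact ⟨x, y, x', z, ⟨hx, hy, hc, ha, hr, hga, hgr⟩, Set.union_singleton⟩
  · rintro ⟨x, y, x', z, h, rfl⟩
    refine ⟨(x, y), (x', z), x, y, x', z, rfl, rfl, h.lt_fst, h.lt_snd, h.corner_mem, h.above_mem,
      h.right_mem, h.notMem_above, h.notMem_right, fun a hxa hax' ha => ?_, fun b hyb _ hb => ?_,
      Set.union_singleton.symm⟩
    · exact (hT.rowWidth_lt h.corner_mem ha hxa h.lt_snd).not_ge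
        (hax'.le.trans (hT.le_rowWidth h.right_mem))
    · exact (hT.rowWidth_lt h.corner_mem hb h.lt_fst hyb).not_ge (hT.le_rowWidth h.right_mem)

theorem rowCount_insert {T : Set (ℕ × ℕ)} {x y : ℕ} (hfin : {a | (a, y) ∈ T}.Finite)
    (hp : (x, y) ∉ T) : rowCount (insert (x, y) T) = rowCount T + Pi.single y 1 := by
  funext j
  by_cases hj : j = y
  · subst hj
    have hrow : {a | (a, j) ∈ insert (x, j) T} = insert x {a | (a, j) ∈ T} := by
      ext a
      simp
    have hx : x ∉ {a | (a, j) ∈ T} := hp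
    simp only [rowCount, Pi.add_apply, Pi.single_eq_same]
    rw [hrow, Set.ncard_insert_of_notMem hx hfin]
  · simp [rowCount, hj]

namespace IsElbow

variable {ν : List Bool} {T : Set (ℕ × ℕ)} {x y x' z : ℕ}

theorem isLeast_row (h : IsElbow T x y x' z) (hT : IsCompatibleFamily ν T) :
    IsLeast {a | (a, y) ∈ T} x := by
  refine ⟨h.corner_mem, fun a ha => not_lt.1 fun hax => ?_⟩
  exact (hT.rowWidth_lt ha h.above_mem hax h.lt_snd).not_ge (hT.le_rowWidth h.corner_mem)

theorem notMem (h : IsElbow T x y x' z) (hT : IsCompatibleFamily ν T) : (x', z) ∉ T := fun hmem =>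
  (hT.rowWidth_lt h.corner_mem hmem h.lt_fst h.lt_snd).not_ge (hT.le_rowWidth h.right_mem)

theorem isCompatibleFamily_rotate (h : IsElbow T x y x' z) (hT : IsCompatibleFamily ν T) :
    IsCompatibleFamily ν (insert (x', z) (T \ {(x, y)})) := by
  have hx'z : x' ≤ rowWidth ν z :=
    (hT.le_rowWidth h.right_mem).trans (rowWidth_mono ν h.lt_snd.le)
  have hmem : (x', z) ∈ APts ν := mem_APts_iff.2 ⟨hT.le_northSteps h.above_mem, hx'z⟩
  refine .of_rowWidth_lt (Set.insert_subset hmem (Set.sdiff_subset.trans hT.subset_APts)) ?_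
  rintro a b c d (hab | ⟨hab, hne⟩) (hcd | ⟨hcd, -⟩) hac hbd
  · simp_all
  · obtain ⟨rfl, rfl⟩ := Prod.mk.inj hab
    exact hT.rowWidth_lt h.above_mem hcd (h.lt_fst.trans hac) hbd
  · obtain ⟨rfl, rfl⟩ := Prod.mk.inj hcd
    rcases lt_trichotomy b y with hby | rfl | hyb
    · exact hT.rowWidth_lt hab h.right_mem hac hby
    · have hax : a ≠ x := fun hax => hne (hax ▸ rfl)
      have hxa : x < a := ((h.isLeast_row hT).2 hab).lt_of_ne' hax
      exact absurd hab (h.notMem_right a hxa hac)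
    · have hax : a < x := by
        by_contra! hxa
        rcases hxa.eq_or_lt with rfl | hxa
        · exact h.notMem_above b hyb hbd hab
        · exact (hT.rowWidth_lt h.corner_mem hab hxa hyb).not_ge
            (hac.le.trans (hT.le_rowWidth h.right_mem))
      exact (hT.rowWidth_lt hab h.above_mem hax hbd).trans h.lt_fst
  · exact hT.rowWidth_lt hab hcd hac hbd

theorem isNuTree_rotate (h : IsElbow T x y x' z) (hT : IsNuTree ν T) :
    IsNuTree ν (insert (x', z) (T \ {(x, y)})) := by
  refine (h.isCompatibleFamily_rotate hT.isCompatibleFamily).isNuTree_of_ncard ?_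
  rw [Set.ncard_exchange (h.notMem hT.isCompatibleFamily) h.corner_mem, hT.ncard_eq]

theorem isEastTransfer (h : IsElbow T x y x' z) (hT : IsNuTree ν T) :
    IsEastTransfer ν (rowExcess T) (rowExcess (insert (x', z) (T \ {(x, y)}))) y z := by
  have hcomp := hT.isCompatibleFamily
  have hx := h.isLeast_row hcomp
  have hz := hcomp.le_northSteps h.above_mem
  refine ⟨hz, ⟨⟨h.lt_snd, hT.slack_le hx h.lt_snd h.above_mem⟩, fun k ⟨hyk, hk⟩ => ?_⟩, ?_⟩
  · by_contra! hkz
    exact (hT.slack_lt hx hyk (hkz.le.trans hz)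
      fun i hyi hik => h.notMem_above i hyi (hik.trans_lt hkz)).not_ge hk
  · set S := T \ {(x, y)}
    have hfin : ∀ j, {a | (a, j) ∈ S}.Finite := fun j =>
      (hcomp.finite_row j).subset fun a ha => ha.1
    have hcorner : rowCount T = rowCount S + Pi.single y 1 := by
      rw [← rowCount_insert (hfin y) (by simp [S] : (x, y) ∉ S), Set.insert_sdiff_self_of_mem
        h.corner_mem]
    have hnew : rowCount (insert (x', z) S) = rowCount S + Pi.single z 1 :=
      rowCount_insert (hfin z) fun hmem => h.notMem hcomp hmem.1
    rw [hT.rowCount_eq_add_indicator] at hcorner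
    rw [(h.isNuTree_rotate hT).rowCount_eq_add_indicator] at hnew
    refine add_right_cancel (b := (Set.Iic (northSteps ν)).indicator 1) ?_
    rw [add_right_comm, hnew, add_right_comm (rowExcess T), hcorner, add_right_comm]

end IsElbow

theorem isRightRotation_iff_exists_isEastTransfer {ν : List Bool} {T T' : Set (ℕ × ℕ)}
    (hT : IsNuTree ν T) (hT' : IsNuTree ν T') :
    IsRightRotation T T' ↔ ∃ y z, IsEastTransfer ν (rowExcess T) (rowExcess T') y z := by
  have hcomp := hT.isCompatibleFamily
  rw [isRightRotation_iff_exists_isElbow hcomp]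
  constructor
  · rintro ⟨x, y, x', z, h, rfl⟩
    exact ⟨y, z, h.isEastTransfer hT⟩
  · rintro ⟨y, z, htransfer⟩
    obtain ⟨x, hx⟩ := hT.exists_isLeast_row htransfer.lt_northSteps.le
    have hright : (nonLeftmost T y).Nonempty := Set.nonempty_of_ncard_ne_zero htransfer.pos.ne'
    obtain ⟨x', hx'⟩ : ∃ x', IsLeast (nonLeftmost T y) x' := ⟨_, isLeast_csInf hright⟩
    have habove : {b | y < b ∧ (x, b) ∈ T}.Nonempty :=
      hT.exists_mem_above hx htransfer.lt_northSteps
    obtain ⟨b, hb⟩ : ∃ b, IsLeast {b | y < b ∧ (x, b) ∈ T} b := ⟨_, isLeast_csInf habove⟩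
    have helbow : IsElbow T x y x' b :=
      { lt_fst := ((mem_nonLeftmost_iff hx).1 hx'.1).2
        lt_snd := hb.1.1
        corner_mem := hx.1
        above_mem := hb.1.2
        right_mem := hx'.1.1
        notMem_above := fun c hyc hcb hc => (hb.2 ⟨hyc, hc⟩).not_gt hcb
        notMem_right := fun a hxa hax' ha => (hx'.2 ((mem_nonLeftmost_iff hx).2 ⟨ha, hxa⟩)).not_gt
          hax' }
    exact ⟨x, y, x', b, helbow, hT'.eq_of_rowExcess_eq (helbow.isNuTree_rotate hT)
      (htransfer.unique (helbow.isEastTransfer hT))⟩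

/-- The number of east steps of a path at height `y`. -/
def eastCount : List Bool → ℕ → ℕ
  | [], _ => 0
  | false :: μ, 0 => eastCount μ 0 + 1
  | false :: μ, y + 1 => eastCount μ (y + 1)
  | true :: _, 0 => 0
  | true :: μ, y + 1 => eastCount μ y

/-- The abscissa of the last point of a path at height `y`. For `y` above the path this is the
abscissa of its endpoint. -/
def exitAbscissa (μ : List Bool) (y : ℕ) : ℕ := ∑ j ∈ Finset.range (y + 1), eastCount μ j

section Paths

variable {μ μ' : List Bool}

theorem eastCount_append_false_cons (l r : List Bool) :
    eastCount (l ++ false :: r) = eastCount (l ++ r) + Pi.single (l.count true) 1 := by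
  funext y
  induction l generalizing y with
  | nil => cases y <;> simp [eastCount]
  | cons step l ih =>
    cases step <;> cases y <;> simp [eastCount, ih, Pi.single_apply, add_right_comm]

theorem eastCount_replicate_false_append (k : ℕ) (r : List Bool) :
    eastCount (List.replicate k false ++ r) = eastCount r + Pi.single 0 k := by
  induction k with
  | zero => simp
  | succ k ih =>
    rw [List.replicate_succ, List.cons_append, ← List.nil_append (false :: _),
      eastCount_append_false_cons, List.nil_append, ih, List.count_nil, add_assoc, ← Pi.single_add]

theorem eastCount_eq_zero {y : ℕ} (hy : northSteps μ < y) : eastCount μ y = 0 := by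
  induction μ generalizing y with
  | nil => rfl
  | cons step μ ih =>
    cases step <;> cases y <;> simp_all [eastCount, northSteps]

theorem eq_of_eastCount_eq (hnorth : northSteps μ = northSteps μ')
    (heast : eastCount μ = eastCount μ') : μ = μ' := by
  induction μ generalizing μ' with
  | nil =>
    rcases μ' with _ | ⟨_ | _, μ'⟩
    · rfl
    · exact absurd (congrFun heast 0) (by simp [eastCount])
    · exact absurd hnorth (by simp [northSteps])
  | cons step μ ih =>
    rcases μ' with _ | ⟨step', μ'⟩
    · cases step
      · exact absurd (congrFun heast 0) (by simp [eastCount])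
      · exact absurd hnorth (by simp [northSteps])
    cases step <;> cases step'
    · have htail : eastCount μ = eastCount μ' :=
        add_right_cancel ((eastCount_append_false_cons [] μ).symm.trans
          (heast.trans (eastCount_append_false_cons [] μ')))
      rw [ih (by simpa [northSteps] using hnorth) htail]
    · exact absurd (congrFun heast 0) (by simp [eastCount])
    · exact absurd (congrFun heast 0) (by simp [eastCount])
    · rw [ih (by simpa [northSteps] using hnorth) (funext fun y => congrFun heast (y + 1))]

theorem exists_eastCount_eq (n : ℕ) (e : ℕ → ℕ) (he : ∀ y, n < y → e y = 0) :
    ∃ μ, northSteps μ = n ∧ eastCount μ = e := by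
  induction n generalizing e with
  | zero =>
    refine ⟨List.replicate (e 0) false ++ [], by simp [northSteps, List.count_replicate], ?_⟩
    rw [eastCount_replicate_false_append]
    funext y
    cases y <;> simp [eastCount, he]
  | succ n ih =>
    obtain ⟨μ, hnorth, heast⟩ := ih (fun y => e (y + 1)) fun y hy => he _ (Nat.succ_lt_succ hy)
    refine ⟨List.replicate (e 0) false ++ true :: μ,
      by simpa [northSteps, List.count_replicate] using hnorth, ?_⟩
    rw [eastCount_replicate_false_append]
    funext y
    cases y <;> simp [eastCount, heast]

theorem exitAbscissa_false_cons (μ : List Bool) (y : ℕ) :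
    exitAbscissa (false :: μ) y = exitAbscissa μ y + 1 := by
  simp only [exitAbscissa, Finset.sum_range_succ', eastCount, add_assoc]

theorem exitAbscissa_true_cons_zero (μ : List Bool) : exitAbscissa (true :: μ) 0 = 0 := by
  simp [exitAbscissa, eastCount]

theorem exitAbscissa_true_cons_succ (μ : List Bool) (y : ℕ) :
    exitAbscissa (true :: μ) (y + 1) = exitAbscissa μ y := by
  simp [exitAbscissa, Finset.sum_range_succ' _ (y + 1), eastCount]

theorem exitAbscissa_append (l r : List Bool) (k : ℕ) :
    exitAbscissa (l ++ r) (l.count true + k) = l.count false + exitAbscissa r k := by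
  induction l with
  | nil => simp
  | cons step l ih =>
    cases step
    · simp [exitAbscissa_false_cons, ih, add_right_comm]
    · simp [add_right_comm _ 1 k, exitAbscissa_true_cons_succ, ih]

theorem exitAbscissa_northSteps (μ : List Bool) : exitAbscissa μ (northSteps μ) = eastSteps μ := by
  simpa [exitAbscissa, eastCount, northSteps, eastSteps] using exitAbscissa_append μ [] 0

theorem pointAt_fst_le_exitAbscissa (μ : List Bool) (i : ℕ) :
    (pointAt μ i).1 ≤ exitAbscissa μ (pointAt μ i).2 := by
  have happend := exitAbscissa_append (μ.take i) (μ.drop i) 0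
  rw [List.take_append_drop, add_zero] at happend
  exact happend ▸ Nat.le_add_right _ _

theorem exists_pointAt_eq {y : ℕ} (hy : y ≤ northSteps μ) :
    ∃ i ≤ μ.length, pointAt μ i = (exitAbscissa μ y, y) := by
  induction μ generalizing y with
  | nil => exact ⟨0, le_rfl, by simp_all [pointAt, northSteps, exitAbscissa, eastCount]⟩
  | cons step μ ih =>
    cases step with
    | false =>
      obtain ⟨i, hi, hpoint⟩ := ih (by simpa [northSteps] using hy)
      refine ⟨i + 1, Nat.succ_le_succ hi, ?_⟩
      simp_all [pointAt, exitAbscissa_false_cons]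
    | true =>
      cases y with
      | zero => exact ⟨0, Nat.zero_le _, by simp [pointAt, exitAbscissa_true_cons_zero]⟩
      | succ y =>
        obtain ⟨i, hi, hpoint⟩ := ih (by simpa [northSteps] using hy)
        refine ⟨i + 1, Nat.succ_le_succ hi, ?_⟩
        simp_all [pointAt, exitAbscissa_true_cons_succ]

theorem pointAt_snd_mono (μ : List Bool) : Monotone fun i => (pointAt μ i).2 := fun _ _ hij =>
  (List.take_sublist_take_left hij).count_le _

theorem pointAt_snd_le_northSteps (μ : List Bool) (i : ℕ) : (pointAt μ i).2 ≤ northSteps μ :=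
  (List.take_sublist i μ).count_le _

theorem pointAt_succ {i : ℕ} (hi : i < μ.length) :
    pointAt μ (i + 1) = pointAt μ i + if μ[i] then (0, 1) else (1, 0) := by
  rw [pointAt, pointAt, ← List.take_concat_get' _ _ hi]
  cases μ[i] <;> simp

theorem exitAbscissa_of_north {i : ℕ} (hi : i < μ.length) (hnorth : μ[i] = true) :
    exitAbscissa μ (pointAt μ i).2 = (pointAt μ i).1 := by
  have happend := exitAbscissa_append (μ.take i) (μ.drop i) 0
  rwa [List.take_append_drop, List.drop_eq_getElem_cons hi, hnorth,
    exitAbscissa_true_cons_zero] at happend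

theorem exists_valley {y : ℕ} (hy : y < northSteps μ) (hpos : 0 < eastCount μ y) :
    ∃ l r, μ = l ++ false :: true :: r ∧ l.count true = y := by
  induction μ generalizing y with
  | nil => exact absurd hpos (by simp [eastCount])
  | cons step μ ih =>
    have hcons : ∀ y', y' < northSteps μ → 0 < eastCount μ y' →
        ((step :: []).count true + y' = y) →
        ∃ l r, step :: μ = l ++ false :: true :: r ∧ l.count true = y := by
      intro y' hy' hpos' hcount
      obtain ⟨l, r, rfl, hl⟩ := ih hy' hpos'
      exact ⟨step :: l, r, rfl, by rw [← hcount, ← hl, ← List.count_append]; rfl⟩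
    cases step with
    | true =>
      cases y with
      | zero => exact absurd hpos (by simp [eastCount])
      | succ y => exact hcons y (by simpa [northSteps] using hy) hpos (by simp [add_comm])
    | false =>
      have hy' : y < northSteps μ := by simpa [northSteps] using hy
      rcases μ with _ | ⟨_ | _, μ⟩
      · exact absurd hy' (by simp [northSteps])
      · refine hcons y hy' ?_ (by simp)
        cases y
        · simp [eastCount]
        · exact hpos
      · cases y with
        | zero => exact ⟨[], μ, rfl, rfl⟩
        | succ y => exact hcons (y + 1) hy' hpos (by simp)

theorem pointsAtHeight_eq {y : ℕ} (hy : y ≤ northSteps μ) :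
    pointsAtHeight μ y = eastCount μ y + 1 := by
  induction μ generalizing y with
  | nil => simp_all [northSteps, pointsAtHeight, eastCount]
  | cons step μ ih =>
    rw [pointsAtHeight, List.length_cons, List.range_succ_eq_map, List.filter_cons, List.filter_map]
    simp only [pointsAtHeight] at ih
    cases step <;> cases y <;> simp_all [Function.comp_def, eastCount, northSteps]

end Paths

theorem slack_eastCount (ν μ : List Bool) (y : ℕ) :
    slack ν (eastCount μ) y = rowWidth ν y - exitAbscissa μ y := by
  rw [slack, exitAbscissa, Nat.cast_sum]

theorem isNuPath_iff {ν μ : List Bool} :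
    IsNuPath ν μ ↔ northSteps μ = northSteps ν ∧ slack ν (eastCount μ) (northSteps ν) = 0 ∧
      ∀ y ≤ northSteps ν, 0 ≤ slack ν (eastCount μ) y := by
  simp only [slack_eastCount, rowWidth_northSteps, sub_nonneg, Nat.cast_le, sub_eq_zero,
    Nat.cast_inj]
  constructor
  · rintro ⟨heast, hnorth, hmem⟩
    refine ⟨hnorth, by rw [← hnorth, exitAbscissa_northSteps, heast], fun y hy => ?_⟩
    obtain ⟨i, hi, hpoint⟩ := exists_pointAt_eq (hnorth ▸ hy)
    exact (mem_APts_iff.1 (hpoint ▸ hmem i hi)).2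
  · rintro ⟨hnorth, heast, hle⟩
    refine ⟨by rw [heast, ← hnorth, exitAbscissa_northSteps], hnorth, fun i _ => ?_⟩
    have hy := hnorth ▸ pointAt_snd_le_northSteps μ i
    exact mem_APts_iff.2 ⟨hy, (pointAt_fst_le_exitAbscissa μ i).trans (hle _ hy)⟩

theorem horiz_add_fst {ν : List Bool} {p : ℕ × ℕ} (hp : p ∈ APts ν) :
    horiz ν p + p.1 = rowWidth ν p.2 := by
  obtain ⟨x, y⟩ := p
  obtain ⟨hy, hx⟩ := mem_APts_iff.1 hp
  have hset : {k | (x + k, y) ∈ APts ν} = Set.Iic (rowWidth ν y - x) := by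
    ext k
    simp only [Set.mem_ofPred_eq, mem_APts_iff, Set.mem_Iic]
    omega
  rw [horiz, hset, csSup_Iic]
  exact Nat.sub_add_cancel hx

/-- The path obtained from `μ` by exchanging the east step preceding the `i`-th point with the
subpath from the `i`-th to the `j`-th point. -/
def valleySwap (μ : List Bool) (i j : ℕ) : List Bool :=
  μ.take (i - 1) ++ (μ.drop i).take (j - i) ++ [false] ++ μ.drop j

theorem valleySwap_append (l s r : List Bool) :
    valleySwap (l ++ false :: (s ++ r)) (l.length + 1) (l.length + (s.length + 1)) =
      (l ++ s) ++ false :: r := by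
  simp [valleySwap, List.drop_length_add_append, add_tsub_add_eq_tsub_left]

/-- The `i`-th point of `μ` is a valley, and the `j`-th point is the first later one with the same
horizontal distance to the right boundary of `A_ν`. -/
structure IsValleyReturn (ν μ : List Bool) (i j : ℕ) : Prop where
  pos : 0 < i
  lt : i < j
  le_length : j ≤ μ.length
  east : μ.getD (i - 1) true = false
  north : μ.getD i false = true
  horiz_eq : horiz ν (pointAt μ j) = horiz ν (pointAt μ i)
  horiz_ne : ∀ k, i < k → k < j → horiz ν (pointAt μ k) ≠ horiz ν (pointAt μ i)

theorem tamariCover_iff_exists_isValleyReturn {ν μ μ' : List Bool} (hμ : IsNuPath ν μ)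
    (hμ' : IsNuPath ν μ') :
    TamariCover ν μ μ' ↔ ∃ i j, IsValleyReturn ν μ i j ∧ μ' = valleySwap μ i j :=
  ⟨fun ⟨_, _, i, j, hpos, hlt, hle, heast, hnorth, heq, hne, hswap⟩ =>
      ⟨i, j, ⟨hpos, hlt, hle, heast, hnorth, heq, hne⟩, hswap⟩,
    fun ⟨i, j, ⟨hpos, hlt, hle, heast, hnorth, heq, hne⟩, hswap⟩ =>
      ⟨hμ, hμ', i, j, hpos, hlt, hle, heast, hnorth, heq, hne, hswap⟩⟩

namespace IsNuPath

variable {ν μ : List Bool} (hμ : IsNuPath ν μ) {i : ℕ}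
include hμ

theorem horiz_pointAt_add_fst (hi : i ≤ μ.length) :
    horiz ν (pointAt μ i) + (pointAt μ i).1 = rowWidth ν (pointAt μ i).2 :=
  horiz_add_fst (hμ.2.2 i hi)

theorem slack_le_horiz (hi : i ≤ μ.length) :
    slack ν (eastCount μ) (pointAt μ i).2 ≤ horiz ν (pointAt μ i) := by
  rw [slack_eastCount, ← hμ.horiz_pointAt_add_fst hi]
  have := pointAt_fst_le_exitAbscissa μ i
  omega

theorem horiz_eq_slack (hi : i ≤ μ.length)
    (hexit : exitAbscissa μ (pointAt μ i).2 = (pointAt μ i).1) :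
    (horiz ν (pointAt μ i) : ℤ) = slack ν (eastCount μ) (pointAt μ i).2 := by
  rw [slack_eastCount, ← hμ.horiz_pointAt_add_fst hi, hexit]
  push_cast
  ring

theorem horiz_le_horiz_succ (hi : i < μ.length) (hnorth : μ[i] = true) :
    horiz ν (pointAt μ i) ≤ horiz ν (pointAt μ (i + 1)) := by
  have hstart := hμ.horiz_pointAt_add_fst hi.le
  have hend := hμ.horiz_pointAt_add_fst hi
  have hwidth := rowWidth_mono ν (Nat.le_add_right (pointAt μ i).2 1)
  simp only [pointAt_succ hi, hnorth, if_true, Prod.fst_add, Prod.snd_add] at hend ⊢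
  omega

theorem horiz_le_horiz_succ_add_one (hi : i < μ.length) :
    horiz ν (pointAt μ i) ≤ horiz ν (pointAt μ (i + 1)) + 1 := by
  cases hstep : μ[i] with
  | true => exact (hμ.horiz_le_horiz_succ hi hstep).trans (Nat.le_succ _)
  | false =>
    have hstart := hμ.horiz_pointAt_add_fst hi.le
    have hend := hμ.horiz_pointAt_add_fst hi
    simp only [pointAt_succ hi, hstep, Bool.false_eq_true, if_false, Prod.fst_add, Prod.snd_add,
      add_zero] at hend ⊢
    omega

theorem horiz_pointAt_length : horiz ν (pointAt μ μ.length) = 0 := by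
  have hend := hμ.horiz_pointAt_add_fst le_rfl
  have hpoint : pointAt μ μ.length = (eastSteps ν, northSteps ν) := by
    rw [← hμ.1, ← hμ.2.1, pointAt, List.take_length, eastSteps, northSteps]
  rw [hpoint, rowWidth_northSteps] at hend
  rw [hpoint]
  exact Nat.add_eq_right.1 hend

theorem exists_isValleyReturn {l r : List Bool} (hsplit : μ = l ++ false :: true :: r) :
    ∃ j, IsValleyReturn ν μ (l.length + 1) j := by
  have hlen : l.length + 1 < μ.length := by simp [hsplit]
  have hnorth : μ[l.length + 1] = true := by simp [hsplit]
  obtain ⟨j, hj⟩ : ∃ j, IsLeast {j | l.length + 1 < j ∧ j ≤ μ.length ∧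
      horiz ν (pointAt μ j) ≤ horiz ν (pointAt μ (l.length + 1))} j :=
    ⟨_, isLeast_csInf ⟨μ.length, hlen, le_rfl, hμ.horiz_pointAt_length.trans_le (Nat.zero_le _)⟩⟩
  obtain ⟨⟨hij, hjlen, hjle⟩, hjmin⟩ := hj
  have hbetween : ∀ k, l.length + 1 < k → k < j →
      horiz ν (pointAt μ (l.length + 1)) < horiz ν (pointAt μ k) := fun k hik hkj => by
    by_contra! hk
    exact (hjmin ⟨hik, hkj.le.trans hjlen, hk⟩).not_gt hkj
  refine ⟨j, l.length.succ_pos, hij, hjlen, by simp [hsplit], by simp [hsplit],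
    le_antisymm hjle ?_, fun k hik hkj => (hbetween k hik hkj).ne'⟩
  obtain ⟨k, rfl⟩ : ∃ k, j = k + 1 := ⟨j - 1, by omega⟩
  rcases (Nat.lt_succ_iff.1 hij).eq_or_lt with rfl | hik
  · exact hμ.horiz_le_horiz_succ hlen hnorth
  · have := hbetween k hik k.lt_succ_self
    have := hμ.horiz_le_horiz_succ_add_one hjlen
    omega

end IsNuPath

namespace IsValleyReturn

variable {ν μ : List Bool} {i j : ℕ} (h : IsValleyReturn ν μ i j)
include h

theorem exists_eq_append :
    ∃ l s r, μ = l ++ false :: (s ++ r) ∧ l.length + 1 = i ∧ l.length + (s.length + 1) = j := by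
  obtain ⟨i, rfl⟩ : ∃ i', i = i' + 1 := ⟨i - 1, (Nat.sub_add_cancel h.pos).symm⟩
  have hi : i < μ.length := by have := h.lt; have := h.le_length; omega
  have heast : μ[i] = false := by simpa [hi] using h.east
  refine ⟨μ.take i, (μ.drop (i + 1)).take (j - (i + 1)), (μ.drop (i + 1)).drop (j - (i + 1)),
    ?_, ?_, ?_⟩
  · rw [List.take_append_drop, ← heast, ← List.drop_eq_getElem_cons, List.take_append_drop]
  · simp [hi.le]
  · have := h.lt
    have := h.le_length
    simp only [List.length_take, List.length_drop]
    omega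

theorem northSteps_valleySwap : northSteps (valleySwap μ i j) = northSteps μ := by
  obtain ⟨l, s, r, rfl, rfl, rfl⟩ := h.exists_eq_append
  simp [valleySwap_append, northSteps]

theorem eastCount_valleySwap :
    eastCount (valleySwap μ i j) + Pi.single (pointAt μ i).2 1 =
      eastCount μ + Pi.single (pointAt μ j).2 1 := by
  obtain ⟨l, s, r, rfl, rfl, rfl⟩ := h.exists_eq_append
  have hi : (pointAt (l ++ false :: (s ++ r)) (l.length + 1)).2 = l.count true := by
    simp [pointAt, List.take_length_add_append]
  have hj : (pointAt (l ++ false :: (s ++ r)) (l.length + (s.length + 1))).2 =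
      (l ++ s).count true := by
    simp [pointAt, List.take_length_add_append]
  rw [valleySwap_append, hi, hj, eastCount_append_false_cons, eastCount_append_false_cons,
    List.append_assoc, add_right_comm]

variable (hμ : IsNuPath ν μ)
include hμ

theorem horiz_lt {k : ℕ} (hik : i < k) (hkj : k < j) :
    horiz ν (pointAt μ i) < horiz ν (pointAt μ k) := by
  have hlen : i < μ.length := h.lt.trans_le h.le_length
  induction k, hik using Nat.le_induction with
  | base =>
    have hnorth : μ[i] = true := by simpa [hlen] using h.north
    exact (hμ.horiz_le_horiz_succ hlen hnorth).lt_of_ne (h.horiz_ne _ i.lt_succ_self hkj).symm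
  | succ k hik ih =>
    have := ih (k.lt_succ_self.trans hkj)
    have := hμ.horiz_le_horiz_succ_add_one (k.lt_succ_self.trans (hkj.trans_le h.le_length))
    have := h.horiz_ne (k + 1) (Nat.lt_succ_of_lt hik) hkj
    omega

theorem isLeast :
    IsLeast {k | (pointAt μ i).2 < k ∧
      slack ν (eastCount μ) k ≤ slack ν (eastCount μ) (pointAt μ i).2} (pointAt μ j).2 := by
  have hlen : i < μ.length := h.lt.trans_le h.le_length
  have hnorth : μ[i] = true := by simpa [hlen] using h.north
  have hslack := hμ.horiz_eq_slack hlen.le (exitAbscissa_of_north hlen hnorth)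
  have hmono := pointAt_snd_mono μ
  refine ⟨⟨?_, ?_⟩, fun k ⟨hik, hk⟩ => ?_⟩
  · refine Nat.lt_of_succ_le (le_of_eq_of_le ?_ (hmono (Nat.succ_le_of_lt h.lt)))
    simp [pointAt_succ hlen, hnorth]
  · rw [← hslack, ← h.horiz_eq]
    exact hμ.slack_le_horiz h.le_length
  · by_contra! hkj
    have hkn : k ≤ northSteps μ := hkj.le.trans (pointAt_snd_le_northSteps μ j)
    obtain ⟨m, hm, hpoint⟩ := exists_pointAt_eq hkn
    have hsnd : (pointAt μ m).2 = k := congrArg Prod.snd hpoint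
    have him : i < m := hmono.reflect_lt (hik.trans_eq hsnd.symm)
    have hmj : m < j := hmono.reflect_lt (hsnd.trans_lt hkj)
    have hhoriz := hμ.horiz_eq_slack hm (by rw [hpoint])
    rw [hsnd] at hhoriz
    have := h.horiz_lt hμ him hmj
    omega

theorem isEastTransfer :
    IsEastTransfer ν (eastCount μ) (eastCount (valleySwap μ i j)) (pointAt μ i).2
      (pointAt μ j).2 :=
  ⟨hμ.2.1 ▸ pointAt_snd_le_northSteps μ j, h.isLeast hμ, h.eastCount_valleySwap⟩

end IsValleyReturn

theorem tamariCover_iff_exists_isEastTransfer {ν μ μ' : List Bool} (hμ : IsNuPath ν μ)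
    (hμ' : IsNuPath ν μ') :
    TamariCover ν μ μ' ↔ ∃ y z, IsEastTransfer ν (eastCount μ) (eastCount μ') y z := by
  rw [tamariCover_iff_exists_isValleyReturn hμ hμ']
  constructor
  · rintro ⟨i, j, h, rfl⟩
    exact ⟨_, _, h.isEastTransfer hμ⟩
  · rintro ⟨y, z, htransfer⟩
    obtain ⟨l, r, hsplit, rfl⟩ :=
      exists_valley (htransfer.lt_northSteps.trans_eq hμ.2.1.symm) htransfer.pos
    obtain ⟨j, hj⟩ := hμ.exists_isValleyReturn hsplit
    have hsource : (pointAt μ (l.length + 1)).2 = l.count true := by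
      simp [hsplit, pointAt, List.take_length_add_append]
    have hswap := hj.isEastTransfer hμ
    rw [hsource] at hswap
    exact ⟨_, j, hj, eq_of_eastCount_eq (by rw [hj.northSteps_valleySwap, hμ.2.1, hμ'.2.1])
      (htransfer.unique hswap)⟩

/-- The list, from right to left, of the abscissae of row `y` of `A_ν` outside the list `F`. -/
def flushAvail (ν : List Bool) (F : List ℕ) (y : ℕ) : List ℕ :=
  (rowAvail ν y).filter fun x => decide (x ∉ F)

/-- The value of the argument `forbidden` of `rflushAux` when it reaches row `y`, where `c` is the
number of points to be placed in each row. -/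
def flushForbidden (ν : List Bool) (c : ℕ → ℕ) : ℕ → List ℕ
  | 0 => []
  | y + 1 => flushForbidden ν c y ++
      ((flushAvail ν (flushForbidden ν c y) y).take (c y)).dropLast

/-- The abscissae placed in row `y` by right-flushing, from right to left, where `c` is the number
of points to be placed in each row. -/
def flushRow (ν : List Bool) (c : ℕ → ℕ) (y : ℕ) : List ℕ :=
  (flushAvail ν (flushForbidden ν c y) y).take (c y)

section DecreasingList

variable {L : List ℕ} {k t x : ℕ}

theorem mem_take_of_lt (hL : L.Pairwise (· > ·)) (ht : t ∈ L.take k) (hx : x ∈ L) (htx : t < x) :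
    x ∈ L.take k := by
  rw [← List.take_append_drop k L] at hL hx
  refine (List.mem_append.1 hx).resolve_right fun hx => ?_
  exact ((List.pairwise_append.1 hL).2.2 t ht x hx).asymm htx

theorem mem_dropLast_iff (hL : L.Pairwise (· > ·)) : x ∈ L.dropLast ↔ x ∈ L ∧ ∃ t < x, t ∈ L := by
  rcases L.eq_nil_or_concat' with rfl | ⟨L, a, rfl⟩
  · simp
  have hlast : ∀ b ∈ L, a < b := fun b hb => (List.pairwise_append.1 hL).2.2 b hb a (by simp)
  simp only [List.dropLast_concat, List.mem_append, List.mem_singleton]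
  refine ⟨fun hx => ⟨Or.inl hx, a, hlast x hx, Or.inr rfl⟩, ?_⟩
  rintro ⟨hx | rfl, t, htx, ht⟩
  · exact hx
  · rcases ht with ht | rfl
    · exact absurd htx (hlast t ht).asymm
    · exact absurd htx (lt_irrefl _)

end DecreasingList

section FlushRow

variable (ν : List Bool) (c : ℕ → ℕ) (F : List ℕ) {x y : ℕ}

theorem flushForbidden_succ (y : ℕ) :
    flushForbidden ν c (y + 1) = flushForbidden ν c y ++ (flushRow ν c y).dropLast := rfl

theorem mem_flushAvail : x ∈ flushAvail ν F y ↔ x ≤ rowWidth ν y ∧ x ∉ F := by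
  simp [flushAvail, rowAvail, le_rowWidth_iff, and_assoc, and_comm (a := x ∉ F)]

theorem pairwise_flushAvail (y : ℕ) : (flushAvail ν F y).Pairwise (· > ·) := by
  rw [flushAvail, rowAvail]
  exact (List.pairwise_reverse.2 (List.pairwise_lt_range.filter _)).filter _

theorem pairwise_flushRow (y : ℕ) : (flushRow ν c y).Pairwise (· > ·) :=
  (pairwise_flushAvail ν _ y).sublist (List.take_sublist _ _)

variable {ν c} in
theorem mem_flushAvail_of_mem_flushRow (hx : x ∈ flushRow ν c y) :
    x ≤ rowWidth ν y ∧ x ∉ flushForbidden ν c y :=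
  (mem_flushAvail ν _).1 (List.mem_of_mem_take hx)

theorem length_flushForbidden_le (y : ℕ) :
    (flushForbidden ν c y).length ≤ ∑ j ∈ Finset.range y, (c j - 1) := by
  induction y with
  | zero => simp [flushForbidden]
  | succ y ih =>
    have hrow : (flushRow ν c y).length ≤ c y := List.length_take_le _ _
    rw [flushForbidden_succ, List.length_append, List.length_dropLast, Finset.sum_range_succ]
    omega

theorem rowWidth_lt_length_flushAvail_add (y : ℕ) :
    rowWidth ν y < (flushAvail ν F y).length + F.length := by
  have hsub : Finset.Iic (rowWidth ν y) ⊆ (flushAvail ν F y ++ F).toFinset := fun x hx => by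
    rw [List.mem_toFinset, List.mem_append, mem_flushAvail, or_iff_not_imp_right]
    exact fun hF => ⟨Finset.mem_Iic.1 hx, hF⟩
  rw [← List.length_append, Nat.lt_iff_add_one_le, ← Nat.card_Iic]
  exact (Finset.card_le_card hsub).trans (List.toFinset_card_le _)

theorem mem_rflushAux (k y : ℕ) (p : ℕ × ℕ) :
    p ∈ rflushAux ν ((List.range k).map fun i => c (y + i)) y (flushForbidden ν c y) ↔
      y ≤ p.2 ∧ p.2 < y + k ∧ p.1 ∈ flushRow ν c p.2 := by
  induction k generalizing y with
  | zero =>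
    simp only [List.range_zero, List.map_nil, rflushAux, List.not_mem_nil, false_iff]
    omega
  | succ k ih =>
    have hcounts : (List.range (k + 1)).map (fun i => c (y + i)) =
        c y :: (List.range k).map fun i => c (y + 1 + i) := by
      simp [List.range_succ_eq_map, Function.comp_def, Nat.add_right_comm, Nat.add_assoc]
    have hstep : rflushAux ν (c y :: (List.range k).map fun i => c (y + 1 + i)) y
        (flushForbidden ν c y) = (flushRow ν c y).map (fun x => (x, y)) ++
          rflushAux ν ((List.range k).map fun i => c (y + 1 + i)) (y + 1)
            (flushForbidden ν c (y + 1)) := rfl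
    obtain ⟨a, b⟩ := p
    rw [hcounts, hstep, List.mem_append, ih, List.mem_map]
    grind

end FlushRow

section Rflush

variable {ν μ : List Bool} {x y : ℕ}

theorem mem_Rflush :
    (x, y) ∈ Rflush ν μ ↔ y ≤ northSteps ν ∧ x ∈ flushRow ν (pointsAtHeight μ) y := by
  have h := mem_rflushAux ν (pointsAtHeight μ) (northSteps ν + 1) 0 (x, y)
  simp only [Nat.zero_add, Nat.zero_le, true_and, Nat.lt_succ_iff] at h
  exact h

theorem nonLeftmost_Rflush (hy : y ≤ northSteps ν) :
    nonLeftmost (Rflush ν μ) y = {x | x ∈ (flushRow ν (pointsAtHeight μ) y).dropLast} := by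
  ext x
  simp [nonLeftmost, mem_Rflush, hy, mem_dropLast_iff (pairwise_flushRow ν _ y)]

theorem forbidden_Rflush (hy : y ≤ northSteps ν) :
    Forbidden (Rflush ν μ) y x ↔ x ∈ flushForbidden ν (pointsAtHeight μ) y := by
  induction y with
  | zero => simp [Forbidden, flushForbidden]
  | succ y ih =>
    rw [forbidden_succ, ih (Nat.le_of_succ_le hy), nonLeftmost_Rflush (Nat.le_of_succ_le hy),
      flushForbidden_succ, List.mem_append, Set.mem_ofPred_eq]

theorem not_forbidden_Rflush (hx : (x, y) ∈ Rflush ν μ) : ¬ Forbidden (Rflush ν μ) y x := by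
  obtain ⟨hy, hx⟩ := mem_Rflush.1 hx
  exact (forbidden_Rflush hy).not.2 (mem_flushAvail_of_mem_flushRow hx).2

theorem mem_Rflush_of_not_forbidden {t : ℕ} (ht : (t, y) ∈ Rflush ν μ) (htx : t < x)
    (hx : x ≤ rowWidth ν y) (hfree : ¬ Forbidden (Rflush ν μ) y x) : (x, y) ∈ Rflush ν μ := by
  obtain ⟨hy, ht⟩ := mem_Rflush.1 ht
  rw [forbidden_Rflush hy] at hfree
  exact mem_Rflush.2 ⟨hy, mem_take_of_lt (pairwise_flushAvail ν _ y) ht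
    ((mem_flushAvail ν _).2 ⟨hx, hfree⟩) htx⟩

theorem isCompatibleFamily_Rflush (ν μ : List Bool) : IsCompatibleFamily ν (Rflush ν μ) := by
  refine .of_rowWidth_lt ?_ ?_
  · rintro ⟨x, y⟩ hp
    obtain ⟨hy, hx⟩ := mem_Rflush.1 hp
    exact mem_APts_iff.2 ⟨hy, (mem_flushAvail_of_mem_flushRow hx).1⟩
  · intro a b c d hp hq hac hbd
    by_contra! hcb
    have hfree : ¬ Forbidden (Rflush ν μ) b c :=
      fun h => not_forbidden_Rflush hq (h.mono hbd.le)
    exact not_forbidden_Rflush hq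
      ⟨b, hbd, mem_Rflush_of_not_forbidden hp hac hcb hfree, a, hac, hp⟩

theorem length_flushRow (hμ : IsNuPath ν μ) (hy : y ≤ northSteps ν) :
    (flushRow ν (pointsAtHeight μ) y).length = eastCount μ y + 1 := by
  obtain ⟨hnorth, -, hslack⟩ := isNuPath_iff.1 hμ
  have hpoints : ∀ j ≤ y, pointsAtHeight μ j = eastCount μ j + 1 :=
    fun j hj => pointsAtHeight_eq (by omega)
  have hforbidden := length_flushForbidden_le ν (pointsAtHeight μ) y
  have hsum : ∑ j ∈ Finset.range y, (pointsAtHeight μ j - 1) =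
      ∑ j ∈ Finset.range y, eastCount μ j :=
    Finset.sum_congr rfl fun j hj => by simp [hpoints j (Finset.mem_range.1 hj).le]
  have hroom := rowWidth_lt_length_flushAvail_add ν (flushForbidden ν (pointsAtHeight μ) y) y
  have hin := hslack y hy
  rw [slack, ← Nat.cast_sum, Finset.sum_range_succ] at hin
  rw [flushRow, List.length_take, hpoints y le_rfl]
  omega

theorem rowExcess_Rflush (hμ : IsNuPath ν μ) : rowExcess (Rflush ν μ) = eastCount μ := by
  funext y
  rcases le_or_gt y (northSteps ν) with hy | hy
  · have hnodup : (flushRow ν (pointsAtHeight μ) y).dropLast.Nodup :=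
      ((pairwise_flushRow ν _ y).imp ne_of_gt).sublist (List.dropLast_sublist _)
    rw [rowExcess, nonLeftmost_Rflush hy, ← List.coe_toFinset, Set.ncard_coe_finset,
      List.toFinset_card_of_nodup hnodup, List.length_dropLast, length_flushRow hμ hy,
      Nat.add_sub_cancel]
  · rw [(isCompatibleFamily_Rflush ν μ).rowExcess_eq_zero hy, eastCount_eq_zero (hμ.2.1 ▸ hy)]

theorem isNuTree_Rflush (hμ : IsNuPath ν μ) : IsNuTree ν (Rflush ν μ) := by
  have hcomp := isCompatibleFamily_Rflush ν μ
  refine hcomp.isNuTree_of_ncard ?_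
  have hrow : ∀ y ∈ Finset.range (northSteps ν + 1),
      rowCount (Rflush ν μ) y = eastCount μ y + 1 := fun y hy => by
    have hy := Nat.lt_succ_iff.1 (Finset.mem_range.1 hy)
    have hrow : {x | (x, y) ∈ Rflush ν μ} = (flushRow ν (pointsAtHeight μ) y).toFinset := by
      ext x
      simp [mem_Rflush, hy]
    have hnodup := (pairwise_flushRow ν (pointsAtHeight μ) y).imp ne_of_gt
    rw [rowCount, hrow, Set.ncard_coe_finset, List.toFinset_card_of_nodup hnodup,
      length_flushRow hμ hy]
  have hexit := exitAbscissa_northSteps μ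
  rw [exitAbscissa, hμ.2.1, hμ.1] at hexit
  rw [hcomp.ncard_eq_sum_rowCount, Finset.sum_congr rfl hrow, Finset.sum_add_distrib, hexit]
  simp [Nat.add_assoc]

end Rflush

section OrderIsomorphism

theorem reflTransGen_iff_of_bijOn {α β : Type*} {r : α → α → Prop} {p : β → β → Prop} {f : α → β}
    {s : Set α} {t : Set β} (hf : Set.BijOn f s t) (hr : ∀ {a b}, r a b → a ∈ s ∧ b ∈ s)
    (hp : ∀ {A B}, p A B → A ∈ t ∧ B ∈ t)
    (hrp : ∀ {a b}, a ∈ s → b ∈ s → (r a b ↔ p (f a) (f b))) {a b : α} (ha : a ∈ s) (hb : b ∈ s) :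
    Relation.ReflTransGen r a b ↔ Relation.ReflTransGen p (f a) (f b) := by
  have : Nonempty α := ⟨a⟩
  have hinv := hf.invOn_invFunOn
  have hmaps := hf.surjOn.mapsTo_invFunOn
  refine ⟨Relation.ReflTransGen.lift f (fun c d h => (hrp (hr h).1 (hr h).2).1 h) a b, fun h => ?_⟩
  have hlift := Relation.ReflTransGen.lift (p := r) (Function.invFunOn f s) (fun C D hCD => by
    obtain ⟨hC, hD⟩ := hp hCD
    rwa [Function.onFun, hrp (hmaps hC) (hmaps hD), hinv.2 hC, hinv.2 hD]) _ _ h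
  rwa [Function.onFun, hinv.1 ha, hinv.1 hb] at hlift

variable (ν : List Bool)

theorem injOn_Rflush : Set.InjOn (Rflush ν) {μ | IsNuPath ν μ} := fun _ hμ _ hμ' h =>
  eq_of_eastCount_eq (hμ.2.1.trans hμ'.2.1.symm)
    ((rowExcess_Rflush hμ).symm.trans ((congrArg rowExcess h).trans (rowExcess_Rflush hμ')))

theorem surjOn_Rflush : Set.SurjOn (Rflush ν) {μ | IsNuPath ν μ} {T | IsNuTree ν T} := by
  intro T (hT : IsNuTree ν T)
  obtain ⟨μ, hnorth, heast⟩ := exists_eastCount_eq (northSteps ν) (rowExcess T)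
    fun _ => hT.isCompatibleFamily.rowExcess_eq_zero
  have hμ : IsNuPath ν μ := isNuPath_iff.2
    ⟨hnorth, heast ▸ hT.slack_northSteps, fun _ hy => heast ▸ hT.slack_nonneg hy⟩
  exact ⟨μ, hμ, (isNuTree_Rflush hμ).eq_of_rowExcess_eq hT ((rowExcess_Rflush hμ).trans heast)⟩

theorem bijOn_Rflush : Set.BijOn (Rflush ν) {μ | IsNuPath ν μ} {T | IsNuTree ν T} :=
  ⟨fun _ => isNuTree_Rflush, injOn_Rflush ν, surjOn_Rflush ν⟩

variable {ν} {μ μ' : List Bool}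

theorem tamariCover_iff_isRightRotation_Rflush (hμ : IsNuPath ν μ) (hμ' : IsNuPath ν μ') :
    TamariCover ν μ μ' ↔ IsRightRotation (Rflush ν μ) (Rflush ν μ') := by
  rw [tamariCover_iff_exists_isEastTransfer hμ hμ',
    isRightRotation_iff_exists_isEastTransfer (isNuTree_Rflush hμ) (isNuTree_Rflush hμ'),
    rowExcess_Rflush hμ, rowExcess_Rflush hμ']

end OrderIsomorphism

theorem rflush_order_isomorphism (ν : List Bool) :
    Set.BijOn (Rflush ν) {μ | IsNuPath ν μ} {T | IsNuTree ν T} ∧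
    ∀ μ μ', IsNuPath ν μ → IsNuPath ν μ' →
      (TamariLE ν μ μ' ↔ TreeLE ν (Rflush ν μ) (Rflush ν μ')) := by
  have hbij := bijOn_Rflush ν
  refine ⟨hbij, fun μ μ' hμ hμ' => reflTransGen_iff_of_bijOn hbij (fun h => ⟨h.1, h.2.1⟩)
    (fun h => ⟨h.1, h.2.1⟩) (fun ha hb => ?_) hμ hμ'⟩
  rw [tamariCover_iff_isRightRotation_Rflush ha hb]
  exact ⟨fun h => ⟨hbij.mapsTo ha, hbij.mapsTo hb, h⟩, fun h => h.2.2⟩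
end

section
/- Let ν be a lattice path and let ←ν be the lattice path obtained by reading ν backwards and exchanging north and east steps. Then the ν-Tamari lattice Tam(ν) is order-isomorphic to the order dual of the ←ν-Tamari lattice Tam(←ν). -/
open scoped Classical

/-!
The lattice paths weakly above `ν` are the postorder edge words of the nonempty binary trees with
canopy `ν`, where a left edge is a north step and a right edge an east step. Under this encoding the
subpath exchanged in a cover is the word of a subtree, and the covers of `Tam(ν)` are the right
rotations `((A B) C) ↦ (A (B C))` with `B` nonempty, which are exactly the ones preserving the
canopy. Reflecting a tree inverts such a rotation and turns the canopy `ν` into `←ν`.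
-/

namespace NuTamari

open BinaryTree

/-! ### Slack of a lattice point -/

/-- The largest abscissa of `ν` in row `y`; rows above the end of `ν` get its final abscissa. -/
def rowMax : List Bool → ℕ → ℕ
  | [], _ => 0
  | false :: ν, y => rowMax ν y + 1
  | true :: _, 0 => 0
  | true :: ν, y + 1 => rowMax ν y

theorem rowMax_le_count_false (ν : List Bool) (y : ℕ) : rowMax ν y ≤ ν.count false := by
  fun_induction rowMax ν y <;> simp_all

theorem rowMax_of_count_true_le {ν : List Bool} {y : ℕ} (h : ν.count true ≤ y) :
    rowMax ν y = ν.count false := by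
  fun_induction rowMax ν y <;> simp_all

theorem rowMax_append_count_true_add (u ν : List Bool) (y : ℕ) :
    rowMax (u ++ ν) (u.count true + y) = u.count false + rowMax ν y := by
  induction u with
  | nil => simp
  | cons b u ih => cases b <;> simp [rowMax, ih, add_right_comm _ 1]

theorem rowMax_append_of_lt {u : List Bool} {y : ℕ} (h : y < u.count true) (ν : List Bool) :
    rowMax (u ++ ν) y = rowMax u y := by
  fun_induction rowMax u y <;> simp_all [rowMax]

theorem rowMax_concat_true (ν : List Bool) (y : ℕ) : rowMax (ν ++ [true]) y = rowMax ν y := by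
  induction ν generalizing y with
  | nil => cases y <;> rfl
  | cons b ν ih => cases b <;> cases y <;> simp [rowMax, ih]

theorem heightAt_le_iff {ν : List Bool} {x y : ℕ} (hx : x ≤ ν.count false) :
    heightAt ν x ≤ y ↔ x ≤ rowMax ν y := by
  fun_induction heightAt ν x generalizing y <;> cases y <;> simp_all [rowMax]

theorem mem_APts_iff {ν : List Bool} {x y : ℕ} :
    (x, y) ∈ APts ν ↔ x ≤ rowMax ν y ∧ y ≤ ν.count true := by
  have hle := rowMax_le_count_false ν y
  constructor
  · rintro ⟨hx, hh, hy⟩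
    exact ⟨(heightAt_le_iff hx).1 hh, hy⟩
  · rintro ⟨hx, hy⟩
    exact ⟨hx.trans hle, (heightAt_le_iff (hx.trans hle)).2 hx, hy⟩

/-- The signed horizontal distance from the endpoint of the word `s` to the end of its row in the
region weakly above `ν`; negative when that endpoint lies to the right of the region. -/
def slack (ν s : List Bool) : ℤ := rowMax ν (s.count true) - s.count false

theorem slack_append_append {u u' : List Bool} (h : u.Perm u') (ν s : List Bool) :
    slack (u ++ ν) (u' ++ s) = slack ν s := by
  simp only [slack, List.count_append, ← h.count_eq, rowMax_append_count_true_add]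
  push_cast
  ring

theorem slack_of_perm {ν s : List Bool} (h : s.Perm ν) : slack ν s = 0 := by
  rw [slack, rowMax_of_count_true_le (h.count_eq true).ge, h.count_eq, sub_self]

theorem slack_cons_false (ν s : List Bool) : slack (false :: ν) s = slack ν s + 1 := by
  simp only [slack, rowMax]
  push_cast
  ring

theorem slack_append_cons_true {u s : List Bool} (h : s.count true ≤ u.count true)
    (ν : List Bool) : slack (u ++ true :: ν) s = slack u s := by
  have hlt : s.count true < (u ++ [true]).count true := by simpa using Nat.lt_succ_of_le h
  rw [slack, slack, List.append_cons, rowMax_append_of_lt hlt, rowMax_concat_true]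

theorem isNuPath_iff {ν μ : List Bool} :
    IsNuPath ν μ ↔ μ.Perm ν ∧ ∀ s, s <+: μ → 0 ≤ slack ν s := by
  simp only [IsNuPath, eastSteps, northSteps, pointAt, mem_APts_iff, List.perm_iff_count,
    Bool.forall_bool, slack, sub_nonneg, Nat.cast_le, and_assoc]
  refine and_congr_right fun _ => and_congr_right fun hN => ⟨fun h s hs => ?_, fun h i _ => ?_⟩
  · rw [List.prefix_iff_eq_take.1 hs]
    exact (h s.length hs.length_le).1
  · exact ⟨h _ (List.take_prefix i μ), hN ▸ (List.take_sublist i μ).count_le true⟩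

theorem horiz_eq_sub {ν : List Bool} {x y : ℕ} (h : (x, y) ∈ APts ν) :
    horiz ν (x, y) = rowMax ν y - x := by
  have hset : {k | (x + k, y) ∈ APts ν} = Set.Iic (rowMax ν y - x) := by
    ext k
    rw [mem_APts_iff] at h
    simp only [Set.mem_ofPred_eq, mem_APts_iff, Set.mem_Iic]
    omega
  rw [horiz, hset, csSup_Iic]

theorem horiz_pointAt_length {ν μ s : List Bool} (h : IsNuPath ν μ) (hs : s <+: μ) :
    (horiz ν (pointAt μ s.length) : ℤ) = slack ν s := by
  have hmem := h.2.2 s.length hs.length_le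
  rw [pointAt, ← List.prefix_iff_eq_take.1 hs] at hmem ⊢
  rw [horiz_eq_sub hmem, Nat.cast_sub (mem_APts_iff.1 hmem).1, slack]

/-! ### Covers in terms of words -/

/-- `c` leads from the valley after `a ++ [false]`, through its north step, to the next point of
the path with the same slack as the valley. -/
def IsFirstReturn (ν a c : List Bool) : Prop :=
  slack ν (a ++ false :: true :: c) = slack ν (a ++ [false]) ∧
    ∀ c', c' <+: c → c' ≠ c → slack ν (a ++ false :: true :: c') ≠ slack ν (a ++ [false])

theorem IsFirstReturn.of_slack_append {ν ν' u a c : List Bool} {k : ℤ}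
    (h : IsFirstReturn ν a c)
    (hk : ∀ s, s <+: a ++ false :: true :: c → slack ν' (u ++ s) = slack ν s + k) :
    IsFirstReturn ν' (u ++ a) c := by
  have hvalley := hk (a ++ [false]) ⟨true :: c, by simp⟩
  have hpoint (c' : List Bool) (hc' : c' <+: c) := hk (a ++ false :: true :: c')
    ((List.prefix_append_right_inj _).2 <| by simpa using hc')
  simp only [IsFirstReturn, List.append_assoc]
  rw [hvalley]
  refine ⟨by rw [hpoint c List.prefix_rfl, h.1], fun c' hc' hne => ?_⟩
  rw [hpoint c' hc', Ne, add_left_inj]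
  exact h.2 c' hc' hne

theorem IsFirstReturn.eq_of_prefix {ν a b c c' : List Bool} (h : IsFirstReturn ν a c)
    (h' : IsFirstReturn ν a c') (hc : c <+: b) (hc' : c' <+: b) : c = c' := by
  by_contra hne
  rcases List.prefix_or_prefix_of_prefix hc hc' with hp | hp
  · exact h'.2 c hp hne h.1
  · exact h.2 c' hp (Ne.symm hne) h'.1

theorem isFirstReturn_iff_horiz {ν a c d : List Bool}
    (h : IsNuPath ν (a ++ false :: true :: (c ++ d))) :
    IsFirstReturn ν a c ↔
      horiz ν (pointAt (a ++ false :: true :: (c ++ d)) (a.length + 2 + c.length)) =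
        horiz ν (pointAt (a ++ false :: true :: (c ++ d)) (a.length + 1)) ∧
      ∀ k, a.length + 1 < k → k < a.length + 2 + c.length →
        horiz ν (pointAt (a ++ false :: true :: (c ++ d)) k) ≠
          horiz ν (pointAt (a ++ false :: true :: (c ++ d)) (a.length + 1)) := by
  have hvalley : (horiz ν (pointAt (a ++ false :: true :: (c ++ d)) (a.length + 1)) : ℤ) =
      slack ν (a ++ [false]) := by
    simpa using horiz_pointAt_length h (s := a ++ [false]) ⟨true :: (c ++ d), by simp⟩
  have hpoint (c' : List Bool) (hc' : c' <+: c) :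
      (horiz ν (pointAt (a ++ false :: true :: (c ++ d)) (a.length + 2 + c'.length)) : ℤ) =
        slack ν (a ++ false :: true :: c') := by
    have hprefix : a ++ false :: true :: c' <+: a ++ false :: true :: (c ++ d) :=
      (List.prefix_append_right_inj a).2 <| by simpa using hc'.trans (List.prefix_append c d)
    rw [← horiz_pointAt_length h hprefix]
    simp [add_assoc, add_comm 2]
  refine and_congr ?_ ⟨fun hne k hk hk' heq => ?_, fun hne c' hc' hcc heq => ?_⟩
  · rw [← hpoint c List.prefix_rfl, ← hvalley, Nat.cast_inj]
  · obtain ⟨m, rfl⟩ := Nat.exists_eq_add_of_le (Nat.succ_le_of_lt hk)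
    have hm : (c.take m).length = m := List.length_take_of_le (by omega)
    have htake := hpoint (c.take m) (List.take_prefix m c)
    rw [hm, show a.length + 2 + m = a.length + 1 + 1 + m from rfl, heq, hvalley] at htake
    exact hne _ (List.take_prefix m c) (fun he => by rw [he] at hm; omega) htake.symm
  · have hlt : c'.length < c.length :=
      lt_of_le_of_ne hc'.length_le fun he => hcc (hc'.eq_of_length he)
    rw [← hpoint c' hc', ← hvalley, Nat.cast_inj] at heq
    exact hne _ (by omega) (by omega) heq

theorem exists_eq_append_cons_cons_of_getD {μ : List Bool} {i : ℕ} (hi : i + 1 < μ.length)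
    (hE : μ.getD i true = false) (hN : μ.getD (i + 1) false = true) :
    ∃ a b, μ = a ++ false :: true :: b ∧ a.length = i := by
  rw [List.getD_eq_getElem _ _ (by omega)] at hE
  rw [List.getD_eq_getElem _ _ hi] at hN
  refine ⟨μ.take i, μ.drop (i + 2), ?_, List.length_take_of_le (by omega)⟩
  rw [← hE, ← hN, ← List.drop_eq_getElem_cons hi, ← List.drop_eq_getElem_cons,
    List.take_append_drop]

theorem tamariCover_iff {ν μ μ' : List Bool} :
    TamariCover ν μ μ' ↔ IsNuPath ν μ ∧ IsNuPath ν μ' ∧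
      ∃ a c d, μ = a ++ false :: true :: (c ++ d) ∧ μ' = a ++ true :: (c ++ false :: d) ∧
        IsFirstReturn ν a c := by
  have hswap (a c d : List Bool) :
      let μ := a ++ false :: true :: (c ++ d)
      let i := a.length + 1
      let j := a.length + 2 + c.length
      μ.take (i - 1) ++ (μ.drop i).take (j - i) ++ [false] ++ μ.drop j =
        a ++ true :: (c ++ false :: d) := by
    have hdiff : a.length + (c.length + 2) - (a.length + 1) = c.length + 1 := by omega
    simp [hdiff, add_assoc, add_comm 2]
  refine and_congr_right fun hμ => and_congr_right fun _ => ⟨?_, ?_⟩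
  · rintro ⟨i, j, hi, hij, hj, hE, hN, heq, hne, hμ'⟩
    obtain ⟨i, rfl⟩ := Nat.exists_eq_succ_of_ne_zero hi.ne'
    obtain ⟨a, b, rfl, rfl⟩ := exists_eq_append_cons_cons_of_getD (by omega) hE hN
    obtain ⟨m, rfl⟩ := Nat.exists_eq_add_of_le (Nat.succ_le_of_lt hij)
    obtain ⟨c, d, rfl, rfl⟩ : ∃ c d, b = c ++ d ∧ c.length = m :=
      ⟨b.take m, b.drop m, (List.take_append_drop m b).symm,
        List.length_take_of_le (by simp at hj; omega)⟩
    exact ⟨a, c, d, rfl, hμ'.trans (hswap a c d), (isFirstReturn_iff_horiz hμ).2 ⟨heq, hne⟩⟩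
  · rintro ⟨a, c, d, rfl, rfl, hret⟩
    obtain ⟨heq, hne⟩ := (isFirstReturn_iff_horiz hμ).1 hret
    exact ⟨a.length + 1, a.length + 2 + c.length, by omega, by omega, by simp; omega, by simp,
      by simp, heq, hne, (hswap a c d).symm⟩

/-! ### Words of trees -/

section Words

variable {α : Type*}

/-- The word of the edges of `T` in postorder, with one more edge of direction `b` above the root
of `T` when `T` is nonempty. Left edges are north steps and right edges are east steps. -/
def plantedPath : Bool → BinaryTree α → List Bool
  | _, nil => []
  | b, .node _ L R => plantedPath true L ++ plantedPath false R ++ [b]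

/-- The lattice path of a tree: its edges in postorder, left edges being north steps and right
edges east steps. -/
def pathWord (T : BinaryTree α) : List Bool :=
  plantedPath true T.left ++ plantedPath false T.right

/-- The word of the edges of `T`, planted by an edge of direction `b`, in which a left edge is read
after the subtree below it and a right edge before. -/
def plantedCanopy : Bool → BinaryTree α → List Bool
  | _, nil => []
  | true, .node _ L R => plantedCanopy true L ++ plantedCanopy false R ++ [true]
  | false, .node _ L R => false :: (plantedCanopy true L ++ plantedCanopy false R)

/-- The canopy of a tree: left edges are read after the subtree below them, right edges before. -/
def canopy (T : BinaryTree α) : List Bool :=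
  plantedCanopy true T.left ++ plantedCanopy false T.right

theorem pathWord_node (x : α) (L R : BinaryTree α) :
    pathWord (.node x L R) = plantedPath true L ++ plantedPath false R :=
  rfl

theorem canopy_node (x : α) (L R : BinaryTree α) :
    canopy (.node x L R) = plantedCanopy true L ++ plantedCanopy false R :=
  rfl

theorem plantedPath_of_ne_nil {T : BinaryTree α} (hT : T ≠ nil) (b : Bool) :
    plantedPath b T = pathWord T ++ [b] := by
  cases T with
  | nil => contradiction
  | node _ L R => rfl

theorem plantedCanopy_true_of_ne_nil {T : BinaryTree α} (hT : T ≠ nil) :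
    plantedCanopy true T = canopy T ++ [true] := by
  cases T with
  | nil => contradiction
  | node _ L R => rfl

theorem plantedCanopy_false_of_ne_nil {T : BinaryTree α} (hT : T ≠ nil) :
    plantedCanopy false T = false :: canopy T := by
  cases T with
  | nil => contradiction
  | node _ L R => rfl

theorem plantedCanopy_perm_plantedPath (b : Bool) (T : BinaryTree α) :
    (plantedCanopy b T).Perm (plantedPath b T) := by
  induction T generalizing b with
  | nil => rfl
  | node _ L R ihL ihR =>
    have h := (ihL true).append (ihR false)
    cases b with
    | true => exact h.append_right _
    | false => exact (h.cons _).trans (List.perm_append_singleton _ _).symm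

theorem canopy_perm_pathWord (T : BinaryTree α) : (canopy T).Perm (pathWord T) :=
  (plantedCanopy_perm_plantedPath _ _).append (plantedCanopy_perm_plantedPath _ _)

/-- The reflection of a tree, exchanging left and right at every node. -/
def mirror : BinaryTree α → BinaryTree α
  | nil => nil
  | .node x L R => .node x (mirror R) (mirror L)

@[simp]
theorem mirror_mirror (T : BinaryTree α) : mirror (mirror T) = T := by
  induction T with
  | nil => rfl
  | node x L R ihL ihR => simp only [mirror, ihL, ihR]

theorem mirror_ne_nil {T : BinaryTree α} : mirror T ≠ nil ↔ T ≠ nil := by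
  cases T <;> simp [mirror]

theorem revPath_append (u v : List Bool) : revPath (u ++ v) = revPath v ++ revPath u := by
  simp [revPath]

theorem revPath_revPath (ν : List Bool) : revPath (revPath ν) = ν := by
  simp [revPath, List.map_reverse, Function.comp_def]

theorem plantedCanopy_mirror (b : Bool) (T : BinaryTree α) :
    plantedCanopy b (mirror T) = revPath (plantedCanopy (!b) T) := by
  induction T generalizing b with
  | nil => rfl
  | node x L R ihL ihR =>
    cases b <;> simp [mirror, plantedCanopy, ihL, ihR, revPath]

theorem canopy_mirror (T : BinaryTree α) : canopy (mirror T) = revPath (canopy T) := by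
  cases T with
  | nil => rfl
  | node x L R =>
    simp only [mirror, canopy_node, plantedCanopy_mirror, revPath_append, Bool.not_true,
      Bool.not_false]

end Words

/-! ### Slack along the path of a tree -/

section TreeSlack

variable {α : Type*}

theorem prefix_left_or_eq_append_of_prefix_append {β : Type*} {s u v : List β}
    (h : s <+: u ++ v) : (s <+: u ∧ s ≠ u) ∨ ∃ t, t <+: v ∧ s = u ++ t := by
  rcases List.prefix_or_prefix_of_prefix h (List.prefix_append u v) with hs | ⟨t, rfl⟩
  · rcases eq_or_ne s u with rfl | hne
    · exact .inr ⟨[], List.nil_prefix, (List.append_nil s).symm⟩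
    · exact .inl ⟨hs, hne⟩
  · exact .inr ⟨t, (List.prefix_append_right_inj u).1 h, rfl⟩

theorem slack_canopy_node_left (x : α) {T : BinaryTree α} (hT : T ≠ nil) (X : BinaryTree α)
    {s : List Bool} (hs : s <+: pathWord T) :
    slack (canopy (.node x T X)) s = slack (canopy T) s := by
  have hcount : s.count true ≤ (canopy T).count true :=
    (canopy_perm_pathWord T).count_eq true ▸ hs.sublist.count_le true
  rw [← slack_append_cons_true hcount (plantedCanopy false X)]
  simp [canopy_node, plantedCanopy_true_of_ne_nil hT]

theorem slack_canopy_node_right (x : α) (X T : BinaryTree α) (s : List Bool) :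
    slack (canopy (.node x X T)) (plantedPath true X ++ s) = slack (plantedCanopy false T) s :=
  slack_append_append (plantedCanopy_perm_plantedPath true X) _ s

theorem slack_canopy_node_node (x y : α) (A B C : BinaryTree α) :
    slack (canopy (.node x (.node y A B) C)) (plantedPath true A ++ plantedPath false B) = 0 := by
  have hperm := (plantedCanopy_perm_plantedPath true A).append
    (plantedCanopy_perm_plantedPath false B)
  have h := slack_append_append hperm (true :: plantedCanopy false C) []
  simpa [canopy_node, plantedCanopy, slack, rowMax] using h

theorem slack_plantedCanopy_false {T : BinaryTree α} (hT : T ≠ nil) (s : List Bool) :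
    slack (plantedCanopy false T) s = slack (canopy T) s + 1 := by
  rw [plantedCanopy_false_of_ne_nil hT, slack_cons_false]

theorem slack_nil_nonneg (ν : List Bool) : 0 ≤ slack ν [] := by
  simp [slack]

theorem slack_plantedCanopy_false_pos {T : BinaryTree α} (hT : IsNuPath (canopy T) (pathWord T))
    {s : List Bool} (hs : s <+: plantedPath false T) (hne : s ≠ plantedPath false T) :
    0 < slack (plantedCanopy false T) s := by
  rcases eq_or_ne T nil with rfl | hT'
  · exact absurd (List.prefix_nil.1 hs) hne
  · rw [plantedPath_of_ne_nil hT'] at hs hne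
    have := (isNuPath_iff.1 hT).2 s ((List.prefix_concat_iff.1 hs).resolve_left hne)
    rw [slack_plantedCanopy_false hT']
    omega

theorem isNuPath_pathWord (T : BinaryTree α) : IsNuPath (canopy T) (pathWord T) := by
  induction T with
  | nil => exact isNuPath_iff.2 ⟨.refl _, fun s hs => List.prefix_nil.1 hs ▸ slack_nil_nonneg _⟩
  | node x L R ihL ihR =>
    refine isNuPath_iff.2 ⟨(canopy_perm_pathWord _).symm, fun s hs => ?_⟩
    rw [pathWord_node] at hs
    rcases prefix_left_or_eq_append_of_prefix_append hs with ⟨hs, hne⟩ | ⟨t, ht, rfl⟩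
    · rcases eq_or_ne L nil with rfl | hL
      · exact absurd (List.prefix_nil.1 hs) hne
      · rw [plantedPath_of_ne_nil hL] at hs hne
        have hs' := (List.prefix_concat_iff.1 hs).resolve_left hne
        rw [slack_canopy_node_left x hL R hs']
        exact (isNuPath_iff.1 ihL).2 s hs'
    · rw [slack_canopy_node_right]
      rcases eq_or_ne t (plantedPath false R) with rfl | hne
      · exact (slack_of_perm (plantedCanopy_perm_plantedPath false R).symm).ge
      · exact (slack_plantedCanopy_false_pos ihR ht hne).le

end TreeSlack

/-! ### Rotations -/

section Rotations

variable {α : Type*}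

/-- `T'` arises from `T` by one right rotation `((A B) C) ↦ (A (B C))` with `B` nonempty, at the
root or below it. In the path of `T`, the edge above `B` and the rotated edge form the valley after
`a`, the word `c` is that of `C` planted by a right edge, and `d` is the rest of the path. -/
inductive RotatesAt : BinaryTree α → BinaryTree α → List Bool → List Bool → List Bool → Prop
  | base (x y : α) (A : BinaryTree α) {B : BinaryTree α} (hB : B ≠ nil) (C : BinaryTree α) :
    RotatesAt (.node x (.node y A B) C) (.node y A (.node x B C))
      (plantedPath true A ++ pathWord B) (plantedPath false C) []
  | left (x : α) (X : BinaryTree α) {T T' : BinaryTree α} {a c d : List Bool}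
    (h : RotatesAt T T' a c d) :
    RotatesAt (.node x T X) (.node x T' X) a c (d ++ true :: plantedPath false X)
  | right (x : α) (X : BinaryTree α) {T T' : BinaryTree α} {a c d : List Bool}
    (h : RotatesAt T T' a c d) :
    RotatesAt (.node x X T) (.node x X T') (plantedPath true X ++ a) c (d ++ [false])

/-- Right rotation at a node whose left child has a nonempty right subtree; these are the right
rotations that preserve the canopy. -/
def Rotation (T T' : BinaryTree α) : Prop :=
  ∃ a c d, RotatesAt T T' a c d

namespace RotatesAt

variable {T T' : BinaryTree α} {a c d : List Bool}

theorem ne_nil (h : RotatesAt T T' a c d) : T ≠ nil := by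
  cases h <;> exact nofun

theorem ne_nil' (h : RotatesAt T T' a c d) : T' ≠ nil := by
  cases h <;> exact nofun

theorem canopy_eq (h : RotatesAt T T' a c d) : canopy T' = canopy T := by
  induction h with
  | base x y A hB C =>
    simp [canopy_node, plantedCanopy,
      plantedCanopy_true_of_ne_nil hB, plantedCanopy_false_of_ne_nil hB]
  | left x X h ih =>
    simp only [canopy_node, plantedCanopy_true_of_ne_nil h.ne_nil,
      plantedCanopy_true_of_ne_nil h.ne_nil'] at ih ⊢
    rw [ih]
  | right x X h ih =>
    simp only [canopy_node, plantedCanopy_false_of_ne_nil h.ne_nil,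
      plantedCanopy_false_of_ne_nil h.ne_nil'] at ih ⊢
    rw [ih]

theorem pathWord_eq (h : RotatesAt T T' a c d) :
    pathWord T = a ++ false :: true :: (c ++ d) := by
  induction h with
  | base x y A hB C =>
    simp [pathWord_node, plantedPath, plantedPath_of_ne_nil hB]
  | left x X h ih => simp [pathWord_node, plantedPath_of_ne_nil h.ne_nil, ih]
  | right x X h ih => simp [pathWord_node, plantedPath_of_ne_nil h.ne_nil, ih]

theorem pathWord_eq' (h : RotatesAt T T' a c d) :
    pathWord T' = a ++ true :: (c ++ false :: d) := by
  induction h with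
  | base x y A hB C =>
    simp [pathWord_node, plantedPath, plantedPath_of_ne_nil hB]
  | left x X h ih => simp [pathWord_node, plantedPath_of_ne_nil h.ne_nil', ih]
  | right x X h ih => simp [pathWord_node, plantedPath_of_ne_nil h.ne_nil', ih]

theorem isFirstReturn (h : RotatesAt T T' a c d) : IsFirstReturn (canopy T) a c := by
  induction h with
  | @base x y A B hB C =>
    have hvalley : slack (canopy (.node x (.node y A B) C))
        (plantedPath true A ++ pathWord B ++ [false]) = 0 := by
      rw [List.append_assoc, ← plantedPath_of_ne_nil hB]
      exact slack_canopy_node_node x y A B C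
    have hpoint (s : List Bool) : plantedPath true A ++ pathWord B ++ false :: true :: s =
        plantedPath true (.node y A B) ++ s := by
      simp [plantedPath, plantedPath_of_ne_nil hB]
    refine ⟨?_, fun s hs hne => ?_⟩
    · rw [hvalley, hpoint, slack_canopy_node_right]
      exact slack_of_perm (plantedCanopy_perm_plantedPath false C).symm
    · rw [hvalley, hpoint, slack_canopy_node_right]
      exact (slack_plantedCanopy_false_pos (isNuPath_pathWord C) hs hne).ne'
  | left x X h ih =>
    refine ih.of_slack_append (u := []) (k := 0) fun s hs => ?_
    rw [List.nil_append, add_zero]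
    refine slack_canopy_node_left x h.ne_nil X (hs.trans ?_)
    rw [h.pathWord_eq]
    exact (List.prefix_append_right_inj _).2 (by simp)
  | right x X h ih =>
    refine ih.of_slack_append (k := 1) fun s _ => ?_
    rw [slack_canopy_node_right, slack_plantedCanopy_false h.ne_nil]

theorem rotation_mirror (h : RotatesAt T T' a c d) : Rotation (mirror T') (mirror T) := by
  induction h with
  | base x y A hB C => exact ⟨_, _, _, .base y x _ (mirror_ne_nil.2 hB) _⟩
  | left x X _ ih =>
    obtain ⟨_, _, _, ih⟩ := ih
    exact ⟨_, _, _, .right x _ ih⟩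
  | right x X _ ih =>
    obtain ⟨_, _, _, ih⟩ := ih
    exact ⟨_, _, _, .left x _ ih⟩

end RotatesAt
theorem append_eq_append_cons_cons {β : Type*} {u v a c : List β} {x y : β}
    (h : u ++ v = a ++ x :: y :: c) :
    (∃ c', u = a ++ x :: y :: c' ∧ c = c' ++ v) ∨ (u = a ++ [x] ∧ v = y :: c) ∨
      ∃ a', v = a' ++ x :: y :: c ∧ a = u ++ a' := by
  rcases List.append_eq_append_iff.1 h with ⟨a', rfl, rfl⟩ | ⟨w, rfl, hw⟩
  · exact .inr (.inr ⟨a', rfl, rfl⟩)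
  · match w with
    | [] => exact .inr (.inr ⟨[], hw.symm, by simp⟩)
    | [z] => simp_all
    | z :: z' :: w => simp_all

theorem pathWord_eq_concat_false {y : α} {A B : BinaryTree α} {a : List Bool}
    (h : pathWord (.node y A B) = a ++ [false]) :
    B ≠ nil ∧ a = plantedPath true A ++ pathWord B := by
  rw [pathWord_node] at h
  rcases eq_or_ne B nil with rfl | hB
  · rcases eq_or_ne A nil with rfl | hA
    · simp [plantedPath] at h
    · simp [plantedPath_of_ne_nil hA, plantedPath] at h
  · rw [plantedPath_of_ne_nil hB, ← List.append_assoc] at h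
    exact ⟨hB, (List.append_inj_left' h rfl).symm⟩

theorem plantedPath_eq_append_valley {e : Bool} {T : BinaryTree α} {a b : List Bool}
    (h : plantedPath e T = a ++ false :: true :: b) :
    (∃ b', pathWord T = a ++ false :: true :: b' ∧ b = b' ++ [e]) ∨
      (pathWord T = a ++ [false] ∧ e = true ∧ b = []) := by
  rcases eq_or_ne T nil with rfl | hT
  · simp [plantedPath] at h
  rw [plantedPath_of_ne_nil hT] at h
  rcases append_eq_append_cons_cons h with hb | ⟨hT, hb⟩ | ⟨a', ha', -⟩
  · exact .inl hb
  · exact .inr ⟨hT, by simpa [eq_comm] using hb⟩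
  · simp [List.singleton_eq_append_iff] at ha'

theorem plantedPath_true_ne_concat_false (T : BinaryTree α) (a : List Bool) :
    plantedPath true T ≠ a ++ [false] := by
  cases T <;> simp [plantedPath, -List.append_assoc]

theorem exists_rotatesAt {T : BinaryTree α} {a b : List Bool}
    (h : pathWord T = a ++ false :: true :: b) : ∃ T' c d, RotatesAt T T' a c d ∧ b = c ++ d := by
  induction T generalizing a b with
  | nil => simp [pathWord, plantedPath] at h
  | node x L R ihL ihR =>
    rw [pathWord_node] at h
    rcases append_eq_append_cons_cons h with ⟨b, hL, rfl⟩ | ⟨hL, -⟩ | ⟨a, hR, rfl⟩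
    · rcases plantedPath_eq_append_valley hL with ⟨b, hvalley, rfl⟩ | ⟨hlast, -, rfl⟩
      · obtain ⟨T', c, d, hT', rfl⟩ := ihL hvalley
        exact ⟨_, _, _, .left x R hT', by simp⟩
      · cases L with
        | nil => simp [plantedPath] at hL
        | node y A B =>
          obtain ⟨hB, rfl⟩ := pathWord_eq_concat_false hlast
          exact ⟨_, _, _, .base x y A hB R, by simp⟩
    · exact absurd hL (plantedPath_true_ne_concat_false L a)
    · rcases plantedPath_eq_append_valley hR with ⟨b, hvalley, rfl⟩ | ⟨-, he, -⟩
      · obtain ⟨T', c, d, hT', rfl⟩ := ihR hvalley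
        exact ⟨_, _, _, .right x L hT', by simp⟩
      · contradiction

theorem tamariCover_pathWord_iff {T : BinaryTree α} {μ : List Bool} :
    TamariCover (canopy T) (pathWord T) μ ↔ ∃ T', Rotation T T' ∧ pathWord T' = μ := by
  refine tamariCover_iff.trans ⟨?_, ?_⟩
  · rintro ⟨-, -, a, c, d, hT, rfl, hret⟩
    obtain ⟨T', c', d', hrot, hcd⟩ := exists_rotatesAt hT
    obtain rfl : c = c' := hret.eq_of_prefix hrot.isFirstReturn ⟨d, rfl⟩ ⟨d', hcd.symm⟩
    obtain rfl : d = d' := List.append_cancel_left hcd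
    exact ⟨T', ⟨a, c, d, hrot⟩, hrot.pathWord_eq'⟩
  · rintro ⟨T', ⟨a, c, d, hrot⟩, rfl⟩
    exact ⟨isNuPath_pathWord T, hrot.canopy_eq ▸ isNuPath_pathWord T', a, c, d, hrot.pathWord_eq,
      hrot.pathWord_eq', hrot.isFirstReturn⟩

theorem Rotation.mirror {T T' : BinaryTree α} (h : Rotation T T') :
    Rotation (mirror T') (mirror T) := by
  obtain ⟨a, c, d, h⟩ := h
  exact h.rotation_mirror

theorem reflTransGen_rotation_mirror_iff {T T' : BinaryTree α} :
    Relation.ReflTransGen Rotation (mirror T') (mirror T) ↔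
      Relation.ReflTransGen Rotation T T' := by
  have hmirror {T T' : BinaryTree α} (h : Relation.ReflTransGen Rotation T T') :
      Relation.ReflTransGen Rotation (mirror T') (mirror T) :=
    Relation.reflTransGen_swap.1 (h.lift mirror fun _ _ h => h.mirror)
  refine ⟨fun h => ?_, hmirror⟩
  simpa only [mirror_mirror] using hmirror h

end Rotations
/-! ### The tree of a path -/

/-- Reading the canopy word `c` and the path word `p` from the right, `T` is the subtree planted by
an edge of direction `b` that comes first, and `c'` and `p'` remain unread. The last two fields make
`T` maximal: a nonempty right subtree is announced by an east step at the end of `p`, and, once no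
such step is left, a nonempty left subtree by a north step at the end of `c`. -/
structure IsParse (b : Bool) (c p : List Bool) (T : BinaryTree Unit) (c' p' : List Bool) :
    Prop where
  canopy_eq : c = c' ++ plantedCanopy b T
  path_eq : p = p' ++ plantedPath b T
  getLast?_path_ne : p'.getLast? ≠ some false
  getLast?_canopy_ne : b = true → c'.getLast? ≠ some true

theorem getLast?_append_plantedPath_true_ne {α : Type*} {p : List Bool}
    (hp : p.getLast? ≠ some false) (T : BinaryTree α) :
    (p ++ plantedPath true T).getLast? ≠ some false := by
  rcases eq_or_ne T nil with rfl | hT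
  · simpa [plantedPath] using hp
  · simp [plantedPath_of_ne_nil hT]

namespace IsParse

variable {b : Bool} {c p c₁ p₁ c₂ p₂ : List Bool} {L R T₁ T₂ : BinaryTree Unit}

theorem false_concat (hR : IsParse false c p R c₁ p₁)
    (hL : IsParse true c₁ p₁ L (c₂ ++ [false]) p₂) :
    IsParse false c (p ++ [false]) (.node () L R) c₂ p₂ where
  canopy_eq := by simp [hR.canopy_eq, hL.canopy_eq, plantedCanopy]
  path_eq := by simp [hR.path_eq, hL.path_eq, plantedPath]
  getLast?_path_ne := hL.getLast?_path_ne
  getLast?_canopy_ne := nofun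

theorem true_concat (hR : IsParse false c p R c₁ p₁) (hL : IsParse true c₁ p₁ L c₂ p₂) :
    IsParse true (c ++ [true]) (p ++ [true]) (.node () L R) c₂ p₂ where
  canopy_eq := by simp [hR.canopy_eq, hL.canopy_eq, plantedCanopy]
  path_eq := by simp [hR.path_eq, hL.path_eq, plantedPath]
  getLast?_path_ne := hL.getLast?_path_ne
  getLast?_canopy_ne := hL.getLast?_canopy_ne

theorem eq_nil_iff (h : IsParse b c p T₁ c₁ p₁) :
    T₁ = nil ↔ p.getLast? ≠ some false ∧ (b = true → c.getLast? ≠ some true) := by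
  obtain ⟨rfl, rfl, hp, hc⟩ := h
  rcases eq_or_ne T₁ nil with rfl | hT
  · simpa [plantedCanopy, plantedPath] using ⟨hp, hc⟩
  · cases b <;> simp [plantedPath_of_ne_nil, plantedCanopy_true_of_ne_nil, hT]

theorem unique (h₁ : IsParse b c p T₁ c₁ p₁) (h₂ : IsParse b c p T₂ c₂ p₂) :
    T₁ = T₂ ∧ c₁ = c₂ ∧ p₁ = p₂ := by
  induction T₁ generalizing b c p c₁ p₁ c₂ p₂ T₂ with
  | nil =>
    obtain rfl : T₂ = nil := h₂.eq_nil_iff.2 (h₁.eq_nil_iff.1 rfl)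
    exact ⟨rfl, by simpa [plantedCanopy] using h₁.canopy_eq.symm.trans h₂.canopy_eq,
      by simpa [plantedPath] using h₁.path_eq.symm.trans h₂.path_eq⟩
  | node x L₁ R₁ ihL ihR =>
    obtain _ | ⟨y, L₂, R₂⟩ := T₂
    · exact absurd (h₁.eq_nil_iff.2 (h₂.eq_nil_iff.1 rfl)) nofun
    obtain ⟨rfl, rfl, hp₁, hc₁⟩ := h₁
    obtain ⟨hc, hp, hp₂, hc₂⟩ := h₂
    have hpath : p₁ ++ plantedPath true L₁ ++ plantedPath false R₁ =
        p₂ ++ plantedPath true L₂ ++ plantedPath false R₂ :=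
      List.append_inj_left' (t₁ := [b]) (t₂ := [b]) (by simpa [plantedPath] using hp) rfl
    have heq {e₁ e₂ : List Bool}
        (hcanopy : e₁ ++ plantedCanopy true L₁ ++ plantedCanopy false R₁ =
          e₂ ++ plantedCanopy true L₂ ++ plantedCanopy false R₂)
        (he₁ : e₁.getLast? ≠ some true) (he₂ : e₂.getLast? ≠ some true) :
        node x L₁ R₁ = node y L₂ R₂ ∧ e₁ = e₂ ∧ p₁ = p₂ := by
      obtain ⟨rfl, hcL, hpL⟩ := ihR (b := false)
        ⟨rfl, rfl, getLast?_append_plantedPath_true_ne hp₁ L₁, nofun⟩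
        ⟨hcanopy, hpath, getLast?_append_plantedPath_true_ne hp₂ L₂, nofun⟩
      obtain ⟨rfl, rfl, rfl⟩ := ihL (b := true) ⟨rfl, rfl, hp₁, fun _ => he₁⟩
        ⟨hcL, hpL, hp₂, fun _ => he₂⟩
      exact ⟨rfl, rfl, rfl⟩
    cases b with
    | false =>
      obtain ⟨hT, he, hp⟩ := heq (e₁ := c₁ ++ [false]) (e₂ := c₂ ++ [false])
        (by simpa [plantedCanopy] using hc) (by simp) (by simp)
      exact ⟨hT, List.append_inj_left' he rfl, hp⟩
    | true =>
      refine heq (List.append_inj_left' (t₁ := [true]) (t₂ := [true]) ?_ rfl) (hc₁ rfl) (hc₂ rfl)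
      simpa [plantedCanopy] using hc

theorem count_add_count (h : IsParse b c p T₁ c₁ p₁) (e : Bool) :
    c.count e + p₁.count e = c₁.count e + p.count e := by
  have := (plantedCanopy_perm_plantedPath b T₁).count_eq e
  simp only [h.canopy_eq, h.path_eq, List.count_append]
  omega

end IsParse

theorem exists_eq_concat_of_count_pos {b : Bool} {l : List Bool} (h : 0 < l.count b)
    (hl : l.getLast? ≠ some !b) : ∃ l', l = l' ++ [b] := by
  have hne : l ≠ [] := List.ne_nil_of_mem (List.count_pos_iff.1 h)
  refine List.getLast?_eq_some_iff.1 ?_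
  rw [List.getLast?_eq_some_getLast hne] at hl ⊢
  simpa using hl

theorem exists_isParse {b : Bool} {c p : List Bool} (ht : p.count true = c.count true)
    (hf : p.count false ≤ c.count false) (hb : b = true → p.getLast? ≠ some false) :
    ∃ T c' p', IsParse b c p T c' p' := by
  induction hn : p.length using Nat.strong_induction_on generalizing b c p with | _ n ih
  subst hn
  have hchildren {c q : List Bool} (hq : q.length < p.length) (ht : q.count true = c.count true)
      (hf : q.count false ≤ c.count false) : ∃ R L c₁ q₁ c₂ q₂,
        IsParse false c q R c₁ q₁ ∧ IsParse true c₁ q₁ L c₂ q₂ := by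
    obtain ⟨R, c₁, q₁, hR⟩ := ih _ hq (b := false) ht hf nofun rfl
    have hlen : q₁.length ≤ q.length := by simp [hR.path_eq]
    have hcount := hR.count_add_count
    obtain ⟨L, c₂, q₂, hL⟩ := ih _ (hlen.trans_lt hq) (b := true) (c := c₁)
      (by have := hcount true; omega) (by have := hcount false; omega)
      (fun _ => hR.getLast?_path_ne) rfl
    exact ⟨R, L, c₁, q₁, c₂, q₂, hR, hL⟩
  by_cases hnil : p.getLast? ≠ some false ∧ (b = true → c.getLast? ≠ some true)
  · exact ⟨nil, c, p, by simp [plantedCanopy], by simp [plantedPath], hnil.1, hnil.2⟩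
  cases b with
  | false =>
    obtain ⟨q, rfl⟩ : ∃ q, p = q ++ [false] := List.getLast?_eq_some_iff.1 (by simpa using hnil)
    simp only [List.count_append, List.count_singleton_self] at ht hf
    obtain ⟨R, L, c₁, q₁, c₂, q₂, hR, hL⟩ := hchildren (by simp) (by simpa using ht)
      (Nat.le_of_succ_le hf)
    have hcount : 0 < c₂.count false := by
      have := hR.count_add_count false
      have := hL.count_add_count false
      omega
    obtain ⟨c₃, rfl⟩ := exists_eq_concat_of_count_pos hcount (hL.getLast?_canopy_ne rfl)
    exact ⟨_, _, _, hR.false_concat hL⟩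
  | true =>
    obtain ⟨c, rfl⟩ : ∃ c', c = c' ++ [true] :=
      List.getLast?_eq_some_iff.1 (by have := hb rfl; tauto)
    obtain ⟨q, rfl⟩ := exists_eq_concat_of_count_pos (b := true) (by simp [ht]) (hb rfl)
    obtain ⟨R, L, c₁, q₁, c₂, q₂, hR, hL⟩ := hchildren (c := c) (q := q) (by simp)
      (by simpa using ht) (by simpa using hf)
    exact ⟨_, _, _, hR.true_concat hL⟩

theorem slack_append_cons_false_neg {c p : List Bool} (h : (c ++ [false]).Perm (p ++ [true]))
    (w : List Bool) : slack (c ++ false :: w) p < 0 := by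
  have hE : c.count false + 1 = p.count false := by simpa using h.count_eq false
  have hN : c.count true = p.count true + 1 := by simpa using h.count_eq true
  have hle := rowMax_le_count_false c (p.count true)
  rw [slack, rowMax_append_of_lt (by omega)]
  omega

theorem exists_pathWord_eq {ν μ : List Bool} (h : IsNuPath ν μ) :
    ∃ T : BinaryTree Unit, T ≠ nil ∧ canopy T = ν ∧ pathWord T = μ := by
  obtain ⟨hperm, hslack⟩ := isNuPath_iff.1 h
  obtain ⟨T, c, p, hT⟩ := exists_isParse (b := true) (c := ν ++ [true]) (p := μ ++ [true])
    (by simp [hperm.count_eq]) (by simp [hperm.count_eq]) (by simp)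
  have hnil : T ≠ nil := by simp [Ne, hT.eq_nil_iff]
  obtain rfl : ν = c ++ canopy T := by
    simpa [plantedCanopy_true_of_ne_nil hnil, ← List.append_assoc] using hT.canopy_eq
  obtain rfl : μ = p ++ pathWord T := by
    simpa [plantedPath_of_ne_nil hnil, ← List.append_assoc] using hT.path_eq
  have hcp : c.Perm p := (List.perm_append_right_iff _).1
    (((canopy_perm_pathWord T).symm.append_left c).trans hperm.symm)
  rcases List.eq_nil_or_concat' p with rfl | ⟨p, e, rfl⟩
  · obtain rfl := hcp.eq_nil
    exact ⟨T, hnil, rfl, rfl⟩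
  obtain rfl : e = true := by simpa using hT.getLast?_path_ne
  obtain ⟨c, rfl⟩ : ∃ c', c = c' ++ [false] := by
    rcases List.eq_nil_or_concat' c with rfl | ⟨c, e, rfl⟩
    · simpa using hcp.symm.eq_nil
    · exact ⟨c, by simpa using hT.getLast?_canopy_ne rfl⟩
  refine absurd (hslack p ⟨true :: pathWord T, by simp⟩) (not_le.2 ?_)
  simpa using slack_append_cons_false_neg hcp (canopy T)

/-- The nonempty binary trees with canopy `ν`. -/
def treesWithCanopy (ν : List Bool) : Set (BinaryTree Unit) :=
  {T | T ≠ nil ∧ canopy T = ν}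

theorem injOn_pathWord (ν : List Bool) : Set.InjOn pathWord (treesWithCanopy ν) := by
  rintro T ⟨hT, rfl⟩ T' ⟨hT', hcanopy⟩ hpath
  have hparse : IsParse true (canopy T ++ [true]) (pathWord T ++ [true]) T [] [] :=
    ⟨by simp [plantedCanopy_true_of_ne_nil hT], by simp [plantedPath_of_ne_nil hT], by simp,
      by simp⟩
  have hparse' : IsParse true (canopy T ++ [true]) (pathWord T ++ [true]) T' [] [] :=
    ⟨by simp [plantedCanopy_true_of_ne_nil hT', hcanopy],
      by simp [plantedPath_of_ne_nil hT', hpath], by simp, by simp⟩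
  exact (hparse.unique hparse').1

theorem bijOn_pathWord (ν : List Bool) :
    Set.BijOn pathWord (treesWithCanopy ν) {μ | IsNuPath ν μ} := by
  refine ⟨?_, injOn_pathWord ν, fun μ hμ => ?_⟩
  · rintro T ⟨-, rfl⟩
    exact isNuPath_pathWord T
  · obtain ⟨T, hT, hν, hμ⟩ := exists_pathWord_eq hμ
    exact ⟨T, ⟨hT, hν⟩, hμ⟩

theorem mapsTo_mirror (ν : List Bool) :
    Set.MapsTo mirror (treesWithCanopy ν) (treesWithCanopy (revPath ν)) := by
  rintro T ⟨hT, rfl⟩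
  exact ⟨mirror_ne_nil.2 hT, canopy_mirror T⟩

theorem bijOn_mirror (ν : List Bool) :
    Set.BijOn mirror (treesWithCanopy ν) (treesWithCanopy (revPath ν)) :=
  Set.InvOn.bijOn ⟨fun T _ => mirror_mirror T, fun T _ => mirror_mirror T⟩ (mapsTo_mirror ν)
    (by simpa only [revPath_revPath] using mapsTo_mirror (revPath ν))

theorem Rotation.mem_treesWithCanopy {ν : List Bool} {T T' : BinaryTree Unit}
    (h : Rotation T T') (hT : T ∈ treesWithCanopy ν) : T' ∈ treesWithCanopy ν := by
  obtain ⟨a, c, d, h⟩ := h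
  exact ⟨h.ne_nil', h.canopy_eq.trans hT.2⟩

theorem exists_reflTransGen_of_tamariLE {ν μ : List Bool} {T : BinaryTree Unit}
    (hT : T ∈ treesWithCanopy ν) (h : TamariLE ν (pathWord T) μ) :
    ∃ T' ∈ treesWithCanopy ν, Relation.ReflTransGen Rotation T T' ∧ pathWord T' = μ := by
  induction h with
  | refl => exact ⟨T, hT, .refl, rfl⟩
  | tail _ hcover ih =>
    obtain ⟨T', hT', hle, rfl⟩ := ih
    obtain ⟨T'', hrot, rfl⟩ := tamariCover_pathWord_iff.1 (hT'.2.symm ▸ hcover)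
    exact ⟨T'', hrot.mem_treesWithCanopy hT', hle.tail hrot, rfl⟩

theorem tamariLE_pathWord_iff {ν : List Bool} {T T' : BinaryTree Unit}
    (hT : T ∈ treesWithCanopy ν) (hT' : T' ∈ treesWithCanopy ν) :
    TamariLE ν (pathWord T) (pathWord T') ↔ Relation.ReflTransGen Rotation T T' := by
  refine ⟨fun h => ?_, fun h => ?_⟩
  · obtain ⟨T'', hT'', hle, hpath⟩ := exists_reflTransGen_of_tamariLE hT h
    rwa [← injOn_pathWord ν hT'' hT' hpath]
  · clear hT'
    induction h using Relation.ReflTransGen.head_induction_on with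
    | refl => exact .refl
    | head hrot _ ih =>
      refine .head ?_ (ih (hrot.mem_treesWithCanopy hT))
      exact hT.2 ▸ tamariCover_pathWord_iff.2 ⟨_, hrot, rfl⟩

end NuTamari

theorem tamari_dual_of_reverse (ν : List Bool) :
    ∃ e : List Bool → List Bool,
      Set.BijOn e {μ | IsNuPath ν μ} {μ | IsNuPath (revPath ν) μ} ∧
      ∀ μ μ', IsNuPath ν μ → IsNuPath ν μ' →
        (TamariLE ν μ μ' ↔ TamariLE (revPath ν) (e μ') (e μ)) := by
  let tree := Function.invFunOn NuTamari.pathWord (NuTamari.treesWithCanopy ν)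
  have hbij := NuTamari.bijOn_pathWord ν
  have htree : Set.BijOn tree {μ | IsNuPath ν μ} (NuTamari.treesWithCanopy ν) :=
    hbij.symm hbij.invOn_invFunOn.symm
  refine ⟨NuTamari.pathWord ∘ NuTamari.mirror ∘ tree, (NuTamari.bijOn_pathWord _).comp
    ((NuTamari.bijOn_mirror ν).comp htree), fun μ μ' hμ hμ' => ?_⟩
  obtain ⟨T, hT, rfl⟩ := hbij.surjOn hμ
  obtain ⟨T', hT', rfl⟩ := hbij.surjOn hμ'
  have htree_pathWord := hbij.invOn_invFunOn.1
  simp only [Function.comp_apply, tree, htree_pathWord hT, htree_pathWord hT']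
  rw [NuTamari.tamariLE_pathWord_iff hT hT', NuTamari.tamariLE_pathWord_iff
    (NuTamari.mapsTo_mirror ν hT') (NuTamari.mapsTo_mirror ν hT),
    NuTamari.reflTransGen_rotation_mirror_iff]
end
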